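/- arXiv:1808.02991 — 9 statements merged into one kernel-verified Lean document; each statement's English description precedes it below -/
import Mathlib

section
/- Let L be a finite-dimensional Lie algebra of dimension s over a field of characteristic different from 2 and 3, and let 0 → S → T →γ L → 0 be a stem extension of L. Then both S and T are finite-dimensional and dim S ≤ s(s−1)/2 + s (hence dim T ≤ s(s−1)/2 + 2s). -/
/-!
If `I` is a central ideal of a Lie algebra `T`, then `⁅x, y⁆` depends only on the classes of `x` and
`y` modulo `I`. The bracket of `T` therefore factors through `⋀² (T ⧸ I)`, and the image of the
resulting linear map is `[T, T]`, so `dim [T, T]` is at most `dim (T ⧸ I)` choose `2`. In a stem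
extension of `L` one takes `I = S`, which lies in `[T, T]`.
-/

section AlternatingMap

variable {R M N : Type*} [CommRing R] [AddCommGroup M] [Module R M] [AddCommGroup N] [Module R N]

/-- An alternating bilinear map, as an alternating map in two variables. It lets the universal
property of the exterior square apply to bilinear maps given in curried form. -/
def alternatingMapOfIsAlt (B : M →ₗ[R] M →ₗ[R] N) (hB : B.IsAlt) : M [⋀^Fin 2]→ₗ[R] N where
  toFun v := B (v 0) (v 1)
  map_update_add' v i x y := by fin_cases i <;> simp
  map_update_smul' v i c x := by fin_cases i <;> simp
  map_eq_zero_of_eq' v i j hv hij := by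
    have h01 : v 0 = v 1 := by fin_cases i <;> fin_cases j <;> simp_all
    simp only [h01, hB.self_eq_zero]

@[simp]
lemma alternatingMapOfIsAlt_apply (B : M →ₗ[R] M →ₗ[R] N) (hB : B.IsAlt) (v : Fin 2 → M) :
    alternatingMapOfIsAlt B hB v = B (v 0) (v 1) :=
  rfl

variable {n : ℕ} (f : M [⋀^Fin n]→ₗ[R] N)

lemma range_alternatingMapLinearEquiv :
    LinearMap.range (exteriorPower.alternatingMapLinearEquiv f) =
      Submodule.span R (Set.range f) := by
  rw [LinearMap.range_eq_map, ← exteriorPower.ιMulti_span, Submodule.map_span, ← Set.range_comp,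
    ← LinearMap.coe_compAlternatingMap, exteriorPower.alternatingMapLinearEquiv_comp_ιMulti]

lemma finite_span_range_alternatingMap [Module.Finite R M] :
    Module.Finite R (Submodule.span R (Set.range f)) := by
  rw [← range_alternatingMapLinearEquiv]
  infer_instance

lemma finrank_span_range_alternatingMap_le_choose [Nontrivial R] [Module.Finite R M]
    [Module.Free R M] :
    Module.finrank R (Submodule.span R (Set.range f)) ≤ (Module.finrank R M).choose n := by
  rw [← range_alternatingMapLinearEquiv, ← exteriorPower.finrank_eq]
  exact LinearMap.finrank_range_le _

end AlternatingMap

section CentralIdeal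

variable {R T : Type*} [CommRing R] [LieRing T] [LieAlgebra R T] {I : LieIdeal R T}

lemma isAlt_toEnd : LinearMap.IsAlt (LieModule.toEnd R T T : T →ₗ[R] T →ₗ[R] T) :=
  lie_self

lemma toSubmodule_le_ker_toEnd_of_le_center (hI : I ≤ LieAlgebra.center R T) :
    I.toSubmodule ≤ LinearMap.ker (LieModule.toEnd R T T : T →ₗ[R] T →ₗ[R] T) := by
  rwa [← LieAlgebra.self_module_ker_eq_center] at hI

/-- The bracket of `T` as an alternating map on the quotient by a central ideal `I`. Its values are
in `T` itself, not in `T ⧸ I`, so that `[T, T]` becomes an image of `⋀² (T ⧸ I)`. -/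
def bracketOfLECenter (hI : I ≤ LieAlgebra.center R T) : (T ⧸ I) [⋀^Fin 2]→ₗ[R] T :=
  alternatingMapOfIsAlt
    (isAlt_toEnd.isRefl.liftQ₂ (LieModule.toEnd R T T : T →ₗ[R] T →ₗ[R] T) I.toSubmodule
      (toSubmodule_le_ker_toEnd_of_le_center hI))
    (by rintro ⟨x⟩; exact lie_self x)

@[simp]
lemma bracketOfLECenter_mk (hI : I ≤ LieAlgebra.center R T) (v : Fin 2 → T) :
    bracketOfLECenter hI (fun i ↦ LieSubmodule.Quotient.mk (v i)) = ⁅v 0, v 1⁆ :=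
  rfl

lemma span_range_bracketOfLECenter (hI : I ≤ LieAlgebra.center R T) :
    Submodule.span R (Set.range (bracketOfLECenter hI)) = LieAlgebra.derivedSeries R T 1 := by
  have range_eq : Set.range (bracketOfLECenter hI) = {⁅x, y⁆ | (x : T) (y : T)} := by
    have lift_surjective : Function.Surjective
        fun (v : Fin 2 → T) i ↦ (LieSubmodule.Quotient.mk (v i) : T ⧸ I) :=
      (LieSubmodule.Quotient.surjective_mk' I).comp_left
    ext z
    constructor
    · rintro ⟨w, rfl⟩
      obtain ⟨v, rfl⟩ := lift_surjective w
      exact ⟨v 0, v 1, (bracketOfLECenter_mk hI v).symm⟩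
    · rintro ⟨x, y, rfl⟩
      exact ⟨_, bracketOfLECenter_mk hI ![x, y]⟩
  rw [range_eq, LieAlgebra.coe_derivedSeries_one_eq]

lemma finite_derivedSeries_one_of_le_center (hI : I ≤ LieAlgebra.center R T)
    [Module.Finite R (T ⧸ I)] : Module.Finite R (LieAlgebra.derivedSeries R T 1) := by
  have := finite_span_range_alternatingMap (bracketOfLECenter hI)
  rwa [span_range_bracketOfLECenter] at this

lemma finrank_derivedSeries_one_le_choose_of_le_center [Nontrivial R]
    (hI : I ≤ LieAlgebra.center R T) [Module.Finite R (T ⧸ I)] [Module.Free R (T ⧸ I)] :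
    Module.finrank R (LieAlgebra.derivedSeries R T 1) ≤ (Module.finrank R (T ⧸ I)).choose 2 := by
  have := finrank_span_range_alternatingMap_le_choose (bracketOfLECenter hI)
  rwa [span_range_bracketOfLECenter] at this

end CentralIdeal

theorem stmt_0_general {K L T : Type*} [Field K] [LieRing L] [LieAlgebra K L] [LieRing T]
    [LieAlgebra K T] [FiniteDimensional K L] (γ : T →ₗ⁅K⁆ L)
    (hcentral : γ.ker ≤ LieAlgebra.center K T)
    (hstem : γ.ker ≤ LieAlgebra.derivedSeries K T 1) :
    FiniteDimensional K γ.ker ∧ FiniteDimensional K T ∧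
      Module.finrank K γ.ker ≤ (Module.finrank K L).choose 2 ∧
      Module.finrank K T ≤ (Module.finrank K L).choose 2 + Module.finrank K L := by
  have finite_quotient : FiniteDimensional K (T ⧸ γ.ker) :=
    γ.quotKerEquivRange.symm.toLinearEquiv.finiteDimensional
  have finrank_quotient_le : Module.finrank K (T ⧸ γ.ker) ≤ Module.finrank K L :=
    γ.quotKerEquivRange.toLinearEquiv.finrank_eq.trans_le (Submodule.finrank_le _)
  have finite_derived := finite_derivedSeries_one_of_le_center hcentral
  have finite_ker : FiniteDimensional K γ.ker := Submodule.finiteDimensional_of_le hstem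
  have finrank_ker_le : Module.finrank K γ.ker ≤ (Module.finrank K L).choose 2 :=
    calc Module.finrank K γ.ker
      _ ≤ Module.finrank K (LieAlgebra.derivedSeries K T 1) := Submodule.finrank_mono hstem
      _ ≤ (Module.finrank K (T ⧸ γ.ker)).choose 2 :=
        finrank_derivedSeries_one_le_choose_of_le_center hcentral
      _ ≤ (Module.finrank K L).choose 2 := Nat.choose_le_choose 2 finrank_quotient_le
  have finite_T : FiniteDimensional K T := Module.Finite.of_submodule_quotient γ.ker.toSubmodule
  have finrank_add : Module.finrank K (T ⧸ γ.ker) + Module.finrank K γ.ker = Module.finrank K T :=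
    γ.ker.toSubmodule.finrank_quotient_add_finrank
  exact ⟨finite_ker, finite_T, finrank_ker_le, by lia⟩

/-- **Lemma 2.2(1), purely even case.**
If `L` is a finite-dimensional Lie algebra of dimension `s` over a field of
characteristic different from `2` and `3`, and `0 → S → T → L → 0` is a stem
extension of `L` (i.e. `γ : T → L` is surjective with kernel `S`, `S` is
contained in the center of `T` and in the derived subalgebra `[T,T]`), then
`S` and `T` are finite-dimensional, `dim S ≤ s(s-1)/2 + s` and
`dim T ≤ s(s-1)/2 + 2s`. -/
theorem stmt_0 (K : Type*) [Field K] (h2 : (2 : K) ≠ 0) (h3 : (3 : K) ≠ 0)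
    (L T : Type*) [LieRing L] [LieAlgebra K L] [LieRing T] [LieAlgebra K T]
    [FiniteDimensional K L]
    (γ : T →ₗ⁅K⁆ L) (hsurj : Function.Surjective γ)
    (S : LieIdeal K T) (hker : γ.ker = S)
    (hcentral : S ≤ LieAlgebra.center K T)
    (hstem : S ≤ LieAlgebra.derivedSeries K T 1) :
    FiniteDimensional K S ∧ FiniteDimensional K T ∧
      Module.finrank K S ≤
        Module.finrank K L * (Module.finrank K L - 1) / 2 + Module.finrank K L ∧
      Module.finrank K T ≤
        Module.finrank K L * (Module.finrank K L - 1) / 2 + 2 * Module.finrank K L := by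
  subst hker
  obtain ⟨finite_ker, finite_T, finrank_ker_le, finrank_T_le⟩ := stmt_0_general γ hcentral hstem
  rw [Nat.choose_two_right] at finrank_ker_le finrank_T_le
  exact ⟨finite_ker, finite_T, by lia, by lia⟩
end

section
/- Let L be a finite-dimensional Lie algebra over a field of characteristic different from 2 and 3, let 0 → A → B →β L → 0 be an extension of L and let 0 → S → T →γ L → 0 be a stem extension of L. Then every Lie algebra homomorphism f : B → T satisfying γ ∘ f = β is surjective. -/
/-!
Since `γ ∘ f = β` is onto, `T = f(B) + S`. As `S` is central, every bracket in `T` already is a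
bracket of elements of `f(B)`, so `S ⊆ [T, T] ⊆ f(B)` and therefore `f(B) = T`.
-/

section CentralSupplement

variable {R T : Type*} [CommRing R] [LieRing T] [LieAlgebra R T] {H : LieSubalgebra R T}

theorem lie_add_add_of_mem_center {z w : T} (hz : z ∈ LieAlgebra.center R T)
    (hw : w ∈ LieAlgebra.center R T) (x y : T) : ⁅x + z, y + w⁆ = ⁅x, y⁆ := by
  have lie_z : ⁅z, y⁆ = 0 := by
    rw [← lie_skew, (LieModule.mem_maxTrivSubmodule R T T z).mp hz y, neg_zero]
  have lie_w : ⁅x + z, w⁆ = 0 := (LieModule.mem_maxTrivSubmodule R T T w).mp hw (x + z)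
  rw [lie_add, lie_w, add_zero, add_lie, lie_z, add_zero]

theorem derivedSeries_one_le_of_sup_center_eq_top
    (h : H.toSubmodule ⊔ (LieAlgebra.center R T).toSubmodule = ⊤) :
    (LieAlgebra.derivedSeries R T 1).toSubmodule ≤ H.toSubmodule := by
  have exists_decomposition (u : T) : ∃ x ∈ H, ∃ z ∈ LieAlgebra.center R T, x + z = u :=
    Submodule.mem_sup.mp (h ▸ Submodule.mem_top)
  change (⁅(⊤ : LieIdeal R T), (⊤ : LieIdeal R T)⁆).toSubmodule ≤ H.toSubmodule
  rw [LieSubmodule.lieIdeal_oper_eq_linear_span', Submodule.span_le]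
  rintro _ ⟨u, -, v, -, rfl⟩
  obtain ⟨x, hx, z, hz, rfl⟩ := exists_decomposition u
  obtain ⟨y, hy, w, hw, rfl⟩ := exists_decomposition v
  rw [lie_add_add_of_mem_center hz hw]
  exact H.lie_mem hx hy

theorem eq_top_of_sup_eq_top_of_le_center_of_le_derivedSeries {S : Submodule R T}
    (hcentral : S ≤ (LieAlgebra.center R T).toSubmodule)
    (hderived : S ≤ (LieAlgebra.derivedSeries R T 1).toSubmodule)
    (h : H.toSubmodule ⊔ S = ⊤) : H = ⊤ := by
  have sup_center : H.toSubmodule ⊔ (LieAlgebra.center R T).toSubmodule = ⊤ :=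
    top_le_iff.mp (h ▸ sup_le_sup_left hcentral _)
  have hS : S ≤ H.toSubmodule :=
    hderived.trans (derivedSeries_one_le_of_sup_center_eq_top sup_center)
  rw [← LieSubalgebra.toSubmodule_inj, LieSubalgebra.top_toSubmodule, ← h, sup_eq_left.mpr hS]

end CentralSupplement

theorem range_sup_ker_eq_top_of_surjective_comp {R M N P : Type*} [Ring R]
    [AddCommGroup M] [Module R M] [AddCommGroup N] [Module R N] [AddCommGroup P] [Module R P]
    {g : N →ₗ[R] P} {f : M →ₗ[R] N} (h : Function.Surjective (g ∘ₗ f)) :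
    LinearMap.range f ⊔ LinearMap.ker g = ⊤ := by
  have hg : LinearMap.range g = ⊤ :=
    LinearMap.range_eq_top.mpr (Function.Surjective.of_comp (g := f) h)
  rw [← LinearMap.map_eq_top_iff hg, ← LinearMap.range_comp, LinearMap.range_eq_top.mpr h]

theorem stmt_2_general {R L B T : Type*} [CommRing R] [LieRing L] [LieAlgebra R L]
    [LieRing B] [LieAlgebra R B] [LieRing T] [LieAlgebra R T] {γ : T →ₗ⁅R⁆ L}
    (hcentral : γ.ker ≤ LieAlgebra.center R T) (hstem : γ.ker ≤ LieAlgebra.derivedSeries R T 1)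
    {f : B →ₗ⁅R⁆ T} (hf : Function.Surjective (γ.comp f)) : Function.Surjective f := by
  have range_sup_ker : f.range.toSubmodule ⊔ γ.ker.toSubmodule = ⊤ := by
    rw [LieHom.range_toSubmodule, LieHom.ker_toSubmodule]
    exact range_sup_ker_eq_top_of_surjective_comp hf
  exact f.range_eq_top.mp
    (eq_top_of_sup_eq_top_of_le_center_of_le_derivedSeries hcentral hstem range_sup_ker)

/-- **Lemma 2.2(3), purely even case.**
Let `L` be a finite-dimensional Lie algebra over a field of characteristic
different from `2` and `3`, let `0 → A → B → L → 0` be an extension of `L`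
and let `0 → S → T → L → 0` be a stem extension of `L`.  Then every Lie
algebra homomorphism `f : B → T` with `γ ∘ f = β` is surjective. -/
theorem stmt_2 (K : Type*) [Field K] (h2 : (2 : K) ≠ 0) (h3 : (3 : K) ≠ 0)
    (L B T : Type*) [LieRing L] [LieAlgebra K L] [LieRing B] [LieAlgebra K B]
    [LieRing T] [LieAlgebra K T] [FiniteDimensional K L]
    (β : B →ₗ⁅K⁆ L) (hβ : Function.Surjective β)
    (A : LieIdeal K B) (hA : β.ker = A)
    (γ : T →ₗ⁅K⁆ L) (hγ : Function.Surjective γ)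
    (S : LieIdeal K T) (hS : γ.ker = S)
    (hcentral : S ≤ LieAlgebra.center K T)
    (hstem : S ≤ LieAlgebra.derivedSeries K T 1)
    (f : B →ₗ⁅K⁆ T) (hf : γ.comp f = β) :
    Function.Surjective f := by
  subst hS hf
  exact stmt_2_general hcentral hstem hβ
end

section
/- Let 0 → A → B →β L → 0 be an extension of Lie algebras over a field of characteristic different from 2 and 3 and let X be a stem denominator of this extension. Then the induced extension 0 → A/X → B/X →β̄ L → 0 is a stem extension of L, i.e. A/X ⊆ Z(B/X) and A/X ⊆ [B/X, B/X]. -/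
/-- The canonical quotient map `L → L ⧸ I` as a morphism of Lie algebras. -/
def LieIdeal.quotMk {R L : Type*} [CommRing R] [LieRing L] [LieAlgebra R L]
    (I : LieIdeal R L) : L →ₗ⁅R⁆ L ⧸ I :=
  { I.toSubmodule.mkQ with map_lie' := fun {_ _} => rfl }

section

variable {R L L' : Type*} [CommRing R] [LieRing L] [LieAlgebra R L]
  [LieRing L'] [LieAlgebra R L']

theorem lieIdeal_quotMk_surjective (I : LieIdeal R L) : Function.Surjective I.quotMk :=
  I.toSubmodule.mkQ_surjective

theorem ker_lieIdeal_quotMk (I : LieIdeal R L) : I.quotMk.ker = I :=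
  LieSubmodule.toSubmodule_injective I.toSubmodule.ker_mkQ

theorem lieIdeal_map_le_center_iff {f : L →ₗ⁅R⁆ L'} (hf : Function.Surjective f)
    (I : LieIdeal R L) :
    I.map f ≤ LieAlgebra.center R L' ↔ ⁅I, (⊤ : LieIdeal R L)⁆ ≤ f.ker := by
  rw [LieModule.le_max_triv_iff_bracket_eq_bot, LieSubmodule.lie_comm,
    ← LieIdeal.map_eq_bot_iff, LieIdeal.map_bracket_eq f hf, ← LieHom.idealRange_eq_map,
    LieHom.idealRange_eq_top_of_surjective f hf]

theorem lieIdeal_map_le_map_iff {f : L →ₗ⁅R⁆ L'} (hf : Function.Surjective f)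
    (I J : LieIdeal R L) : I.map f ≤ J.map f ↔ I ≤ J ⊔ f.ker := by
  rw [LieIdeal.map_le_iff_le_comap,
    LieIdeal.comap_map_eq (congrArg SetLike.coe (LieIdeal.coe_map_of_surjective hf))]

theorem lieIdeal_map_le_derivedSeries_iff {f : L →ₗ⁅R⁆ L'} (hf : Function.Surjective f)
    (I : LieIdeal R L) (k : ℕ) :
    I.map f ≤ LieAlgebra.derivedSeries R L' k ↔ I ≤ LieAlgebra.derivedSeries R L k ⊔ f.ker := by
  rw [← LieIdeal.derivedSeries_map_eq k hf, lieIdeal_map_le_map_iff hf]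

theorem stmt_4_general (A X : LieIdeal R L) :
    (A.map X.quotMk ≤ LieAlgebra.center R (L ⧸ X) ∧
      A.map X.quotMk ≤ LieAlgebra.derivedSeries R (L ⧸ X) 1) ↔
    ⁅A, (⊤ : LieIdeal R L)⁆ ≤ X ∧ A ≤ LieAlgebra.derivedSeries R L 1 ⊔ X := by
  rw [lieIdeal_map_le_center_iff (lieIdeal_quotMk_surjective X),
    lieIdeal_map_le_derivedSeries_iff (lieIdeal_quotMk_surjective X), ker_lieIdeal_quotMk]

end

/-- **Proposition 2.3(2), first part, purely even case.**
Let `0 → A → B → L → 0` be an extension of Lie algebras over a field of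
characteristic different from `2` and `3` and let `X` be a stem denominator of
this extension.  Then the induced extension `0 → A/X → B/X → L → 0` is a stem
extension of `L`: the image `A/X` of `A` in `B/X` is contained in the center
of `B/X` and in the derived subalgebra `[B/X, B/X]`. -/
theorem stmt_4 (K : Type*) [Field K] (h2 : (2 : K) ≠ 0) (h3 : (3 : K) ≠ 0)
    (L B : Type*) [LieRing L] [LieAlgebra K L] [LieRing B] [LieAlgebra K B]
    (β : B →ₗ⁅K⁆ L) (hβ : Function.Surjective β)
    (A : LieIdeal K B) (hA : β.ker = A)
    (X : LieIdeal K B)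
    (hXlow : ⁅A, (⊤ : LieIdeal K B)⁆ ≤ X) (hXhigh : X ≤ A)
    (hsum : A = (A ⊓ LieAlgebra.derivedSeries K B 1) ⊔ X)
    (hint : LieAlgebra.derivedSeries K B 1 ⊓ X = ⁅A, (⊤ : LieIdeal K B)⁆) :
    LieIdeal.map X.quotMk A ≤ LieAlgebra.center K (B ⧸ X) ∧
      LieIdeal.map X.quotMk A ≤ LieAlgebra.derivedSeries K (B ⧸ X) 1 :=
  (stmt_4_general A X).mpr ⟨hXlow, hsum.le.trans (sup_le_sup_right inf_le_right X)⟩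
end

section
/- Every extension 0 → A → B →β L → 0 of Lie algebras over a field of characteristic different from 2 and 3 admits a stem denominator, and hence admits a stem deformation. -/
/-!
Every submodule between `[A,B]` and `A` is an ideal of `B`, so a stem denominator is just a relative
complement of `A ∩ [B,B]` in the interval from `[A,B]` to `A` in the lattice of submodules of `B`.
That lattice is modular and, over a field, complemented, hence such a relative complement exists.
-/

section LieModule

variable {R L M : Type*} [CommRing R] [LieRing L] [LieAlgebra R L]
  [AddCommGroup M] [Module R M] [LieRingModule L M]

theorem exists_lieSubmodule_toSubmodule_eq_of_top_lie_le {N : LieSubmodule R L M}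
    {p : Submodule R M} (hp : (⁅(⊤ : LieIdeal R L), N⁆ : LieSubmodule R L M).toSubmodule ≤ p)
    (hpN : p ≤ N.toSubmodule) :
    ∃ P : LieSubmodule R L M, P.toSubmodule = p :=
  (Submodule.exists_lieSubmodule_coe_eq_iff L p).2 fun x _ hm ↦
    hp (LieSubmodule.lie_mem_lie (LieSubmodule.mem_top x) (hpN hm))

end LieModule

section StemDenominator

variable {R B : Type*} [CommRing R] [LieRing B] [LieAlgebra R B]

/-- `X` is a stem denominator of the extension `0 → A → B → B ⧸ A → 0`: the induced extension
`0 → A ⧸ X → B ⧸ X → B ⧸ A → 0` is a stem deformation of it. Here `[B,B]` is written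
`LieAlgebra.derivedSeries R B 1`, and `X` is taken to be an ideal rather than a submodule, which
loses nothing because every submodule between `[A,B]` and `A` is an ideal. -/
structure IsStemDenominator (A X : LieIdeal R B) : Prop where
  lie_top_le : ⁅A, (⊤ : LieIdeal R B)⁆ ≤ X
  le : X ≤ A
  eq_inf_derivedSeries_one_sup : A = (A ⊓ LieAlgebra.derivedSeries R B 1) ⊔ X
  derivedSeries_one_inf_eq : LieAlgebra.derivedSeries R B 1 ⊓ X = ⁅A, (⊤ : LieIdeal R B)⁆

theorem lie_top_le_inf_derivedSeries_one (A : LieIdeal R B) :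
    ⁅A, (⊤ : LieIdeal R B)⁆ ≤ A ⊓ LieAlgebra.derivedSeries R B 1 :=
  le_inf (LieSubmodule.lie_le_left A ⊤) (LieSubmodule.mono_lie_left ⊤ le_top)

theorem isStemDenominator_of_inf_eq_of_sup_eq {A X : LieIdeal R B}
    (hinf : (A ⊓ LieAlgebra.derivedSeries R B 1) ⊓ X = ⁅A, (⊤ : LieIdeal R B)⁆)
    (hsup : (A ⊓ LieAlgebra.derivedSeries R B 1) ⊔ X = A) :
    IsStemDenominator A X where
  lie_top_le := hinf ▸ inf_le_right
  le := le_sup_right.trans_eq hsup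
  eq_inf_derivedSeries_one_sup := hsup.symm
  derivedSeries_one_inf_eq := by
    have hXA : X ≤ A := le_sup_right.trans_eq hsup
    rw [← hinf, inf_right_comm, inf_eq_right.2 hXA, inf_comm]

theorem stmt_6_general [IsSemisimpleModule R B] (A : LieIdeal R B) :
    ∃ X : LieIdeal R B, IsStemDenominator A X := by
  obtain ⟨p, hinf, hsup⟩ := IsModularLattice.exists_inf_eq_and_sup_eq
    ((LieSubmodule.toSubmodule_le_toSubmodule _ _).2 (lie_top_le_inf_derivedSeries_one A))
    ((LieSubmodule.toSubmodule_le_toSubmodule _ A).2 inf_le_left)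
  have hp : (⁅(⊤ : LieIdeal R B), A⁆ : LieIdeal R B).toSubmodule ≤ p := by
    rw [LieSubmodule.lie_comm, ← hinf]
    exact inf_le_right
  obtain ⟨X, rfl⟩ := exists_lieSubmodule_toSubmodule_eq_of_top_lie_le hp
    (le_sup_right.trans_eq hsup)
  refine ⟨X, isStemDenominator_of_inf_eq_of_sup_eq ?_ ?_⟩
  · rwa [← LieSubmodule.toSubmodule_inj, LieSubmodule.inf_toSubmodule]
  · rwa [← LieSubmodule.toSubmodule_inj, LieSubmodule.sup_toSubmodule]

end StemDenominator

/-- **Proposition 2.3(3), purely even case.**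
Every extension `0 → A → B → L → 0` of Lie algebras over a field of
characteristic different from `2` and `3` admits a stem denominator: an ideal
`X` of `B` with `[A,B] ≤ X ≤ A`, `A = (A ∩ [B,B]) + X` and
`[B,B] ∩ X = [A,B]` (and hence it admits a stem deformation). -/
theorem stmt_6 (K : Type*) [Field K] (h2 : (2 : K) ≠ 0) (h3 : (3 : K) ≠ 0)
    (L B : Type*) [LieRing L] [LieAlgebra K L] [LieRing B] [LieAlgebra K B]
    (β : B →ₗ⁅K⁆ L) (hβ : Function.Surjective β)
    (A : LieIdeal K B) (hA : β.ker = A) :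
    ∃ X : LieIdeal K B,
      ⁅A, (⊤ : LieIdeal K B)⁆ ≤ X ∧ X ≤ A ∧
      A = (A ⊓ LieAlgebra.derivedSeries K B 1) ⊔ X ∧
      LieAlgebra.derivedSeries K B 1 ⊓ X = ⁅A, (⊤ : LieIdeal K B)⁆ := by
  obtain ⟨X, hX⟩ := stmt_6_general A
  exact ⟨X, hX.lie_top_le, hX.le, hX.eq_inf_derivedSeries_one_sup, hX.derivedSeries_one_inf_eq⟩
end

section
/- Let L be a finite-dimensional Lie algebra over a field of characteristic different from 2 and 3, let 0 → A → B →β L → 0 be an extension of L, let 0 → S → T →γ L → 0 be a stem extension of L, and let f : B → T be a Lie algebra homomorphism with γ ∘ f = β. Then there exists a stem denominator X of the extension 0 → A → B →β L → 0 such that f(X) = 0, and the map f̄ : B/X → T induced by f is a surjective homomorphism of extensions (in particular γ ∘ f̄ = β̄ and f̄ maps A/X onto S). -/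
/-!
Since `β = γ ∘ f` is surjective, `f(B) + S = T`. As `S` is central, all brackets of `T` are brackets
of elements of `f(B)`, so `S ⊆ [T,T] ⊆ f(B)`. Hence `f` is onto, maps `[B,B]` onto `[T,T] ⊇ S`, and
`A = f⁻¹(S) = (A ∩ [B,B]) + ker f`; moreover `[A,B] ⊆ ker f` because `S` is central. Any relative
complement of `ker f ∩ [B,B]` in the interval from `[A,B]` to `ker f` of the modular lattice of
subspaces is then a stem denominator killed by `f`.
-/

section StemDenominator

open LieAlgebra

variable {R B T : Type*} [CommRing R] [LieRing B] [LieAlgebra R B] [LieRing T] [LieAlgebra R T]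

/-- `X` is a stem denominator of the extension `0 → A → B → B/A → 0`. It is taken to be an ideal
from the start, which loses nothing by `exists_lieIdeal_toSubmodule_eq`. -/
structure IsStemDenominator_s7 (A X : LieIdeal R B) : Prop where
  lie_top_le : ⁅A, (⊤ : LieIdeal R B)⁆ ≤ X
  le : X ≤ A
  eq_inf_sup : A = (A ⊓ derivedSeries R B 1) ⊔ X
  inf_eq : derivedSeries R B 1 ⊓ X = ⁅A, (⊤ : LieIdeal R B)⁆

theorem lie_top_le_derivedSeries_one (A : LieIdeal R B) :
    ⁅A, (⊤ : LieIdeal R B)⁆ ≤ derivedSeries R B 1 := by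
  rw [derivedSeries_def, derivedSeriesOfIdeal_succ, derivedSeriesOfIdeal_zero]
  exact LieSubmodule.mono_lie_left _ le_top

theorem exists_lieIdeal_toSubmodule_eq {A : LieIdeal R B} {P : Submodule R B}
    (hAP : (⁅A, (⊤ : LieIdeal R B)⁆).toSubmodule ≤ P) (hPA : P ≤ A.toSubmodule) :
    ∃ X : LieIdeal R B, X.toSubmodule = P := by
  refine (Submodule.exists_lieSubmodule_coe_eq_iff B P).2 fun b p hp ↦ hAP ?_
  rw [LieSubmodule.lie_comm]
  exact LieSubmodule.lie_mem_lie (LieSubmodule.mem_top b) (hPA hp)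

theorem exists_isStemDenominator_le [IsSemisimpleModule R B] {A N : LieIdeal R B}
    (hAN : ⁅A, (⊤ : LieIdeal R B)⁆ ≤ N) (hNA : N ≤ A)
    (hA : A = (A ⊓ derivedSeries R B 1) ⊔ N) :
    ∃ X ≤ N, IsStemDenominator_s7 A X := by
  have hAD := lie_top_le_derivedSeries_one A
  obtain ⟨P, hP_inf, hP_sup⟩ := IsModularLattice.exists_inf_eq_and_sup_eq
    (a := (⁅A, (⊤ : LieIdeal R B)⁆).toSubmodule)
    (b := (N ⊓ derivedSeries R B 1).toSubmodule) (c := N.toSubmodule)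
    (le_inf hAN hAD) inf_le_left
  have hPN : P ≤ N.toSubmodule := le_sup_right.trans hP_sup.le
  obtain ⟨X, rfl⟩ := exists_lieIdeal_toSubmodule_eq (hP_inf.ge.trans inf_le_right) (hPN.trans hNA)
  rw [← LieSubmodule.inf_toSubmodule, LieSubmodule.toSubmodule_inj] at hP_inf
  rw [← LieSubmodule.sup_toSubmodule, LieSubmodule.toSubmodule_inj] at hP_sup
  have hXN : X ≤ N := hPN
  refine ⟨X, hXN, hP_inf.ge.trans inf_le_right, hXN.trans hNA, ?_, ?_⟩
  · calc
      A = (A ⊓ derivedSeries R B 1) ⊔ ((N ⊓ derivedSeries R B 1) ⊔ X) := by rw [hP_sup, ← hA]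
      _ = (A ⊓ derivedSeries R B 1) ⊔ X := by
        rw [← sup_assoc, sup_eq_left.2 (inf_le_inf_right _ hNA)]
  · rw [← hP_inf, inf_comm N, inf_assoc, inf_eq_right.2 hXN]

theorem derivedSeries_one_le_of_sup_center_eq_top_s7 {H : LieSubalgebra R T}
    (hH : H.toSubmodule ⊔ (center R T).toSubmodule = ⊤) :
    (derivedSeries R T 1).toLieSubalgebra ≤ H := by
  have exists_add_mem_center (t : T) : ∃ h ∈ H, ∃ z ∈ center R T, h + z = t :=
    Submodule.mem_sup.1 (hH ▸ Submodule.mem_top)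
  rw [← LieSubalgebra.toSubmodule_le_toSubmodule, coe_derivedSeries_one_eq, Submodule.span_le]
  rintro _ ⟨x, y, rfl⟩
  obtain ⟨h, hh, z, hz, rfl⟩ := exists_add_mem_center x
  obtain ⟨k, hk, w, hw, rfl⟩ := exists_add_mem_center y
  have hzk : ⁅z, k⁆ = 0 := by rw [← lie_skew, hz k, neg_zero]
  have hbracket : ⁅h + z, k + w⁆ = ⁅h, k⁆ := by
    rw [lie_add, hw, add_lie, hzk, add_zero, add_zero]
  exact hbracket ▸ H.lie_mem hh hk

theorem lieSubalgebra_eq_top_of_sup_eq_top {S : LieIdeal R T} {H : LieSubalgebra R T}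
    (hcentral : S ≤ center R T) (hstem : S ≤ derivedSeries R T 1)
    (hH : H.toSubmodule ⊔ S.toSubmodule = ⊤) : H = ⊤ := by
  have hS_center : S.toSubmodule ≤ (center R T).toSubmodule := hcentral
  have hH_center : H.toSubmodule ⊔ (center R T).toSubmodule = ⊤ :=
    top_le_iff.1 (hH.ge.trans (sup_le_sup_left hS_center _))
  have hSH : S.toSubmodule ≤ H.toSubmodule := fun s hs ↦
    derivedSeries_one_le_of_sup_center_eq_top_s7 hH_center (hstem hs)
  rw [← LieSubalgebra.toSubmodule_inj, LieSubalgebra.top_toSubmodule, ← hH, sup_eq_left.2 hSH]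

theorem surjective_of_comp_surjective_of_ker_le {L : Type*} [LieRing L] [LieAlgebra R L]
    {γ : T →ₗ⁅R⁆ L} {f : B →ₗ⁅R⁆ T} (hγf : Function.Surjective (γ.comp f))
    (hcentral : γ.ker ≤ center R T) (hstem : γ.ker ≤ derivedSeries R T 1) :
    Function.Surjective f := by
  rw [← LieHom.range_eq_top]
  refine lieSubalgebra_eq_top_of_sup_eq_top hcentral hstem (eq_top_iff.2 fun t _ ↦ ?_)
  obtain ⟨b, hb⟩ := hγf (γ t)
  refine Submodule.mem_sup.2 ⟨f b, ⟨b, rfl⟩, t - f b, ?_, add_sub_cancel _ _⟩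
  exact LieHom.mem_ker.2 (by rw [map_sub, ← hb, LieHom.comp_apply, sub_self])

theorem lie_comap_top_le_ker (f : B →ₗ⁅R⁆ T) {S : LieIdeal R T} (hcentral : S ≤ center R T) :
    ⁅S.comap f, (⊤ : LieIdeal R B)⁆ ≤ f.ker := by
  rw [LieSubmodule.lie_comm, LieSubmodule.lie_le_iff]
  intro b _ a ha
  rw [LieHom.mem_ker, LieHom.map_lie]
  exact hcentral (LieIdeal.mem_comap.1 ha) (f b)

theorem comap_eq_comap_inf_derivedSeries_sup_ker {f : B →ₗ⁅R⁆ T} (hf : Function.Surjective f)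
    {S : LieIdeal R T} {k : ℕ} (hS : S ≤ derivedSeries R T k) :
    S.comap f = (S.comap f ⊓ derivedSeries R B k) ⊔ f.ker := by
  have comap_derivedSeries : (derivedSeries R T k).comap f = derivedSeries R B k ⊔ f.ker := by
    rw [← LieIdeal.derivedSeries_map_eq k hf,
      LieIdeal.comap_map_eq (congrArg SetLike.coe (LieIdeal.coe_map_of_surjective hf))]
  rw [inf_sup_assoc_of_le _ (LieHom.ker_le_comap f S), ← comap_derivedSeries,
    inf_eq_left.2 (LieIdeal.comap_mono hS)]

theorem lieIdeal_map_map {L : Type*} [LieRing L] [LieAlgebra R L]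
    (g : T →ₗ⁅R⁆ L) (f : B →ₗ⁅R⁆ T) (I : LieIdeal R B) :
    (I.map f).map g = I.map (g.comp f) :=
  eq_of_forall_ge_iff fun J ↦ by simp only [LieIdeal.map_le_iff_le_comap]; rfl

/-- The morphism `B ⧸ X → T` induced by a morphism of Lie algebras `B → T` vanishing on `X`. -/
def lieQuotientLift (X : LieIdeal R B) (f : B →ₗ⁅R⁆ T) (hX : X ≤ f.ker) : B ⧸ X →ₗ⁅R⁆ T :=
  { X.toSubmodule.liftQ (f : B →ₗ[R] T) hX with
    map_lie' := by
      rintro ⟨x⟩ ⟨y⟩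
      exact f.map_lie x y }

theorem lieQuotientLift_comp_quotMk (X : LieIdeal R B) (f : B →ₗ⁅R⁆ T) (hX : X ≤ f.ker) :
    (lieQuotientLift X f hX).comp X.quotMk = f :=
  rfl

theorem stmt_7_general [IsSemisimpleModule R B] {L : Type*} [LieRing L] [LieAlgebra R L]
    {β : B →ₗ⁅R⁆ L} (hβ : Function.Surjective β) {A : LieIdeal R B} (hA : β.ker = A)
    {γ : T →ₗ⁅R⁆ L} {S : LieIdeal R T} (hS : γ.ker = S)
    (hcentral : S ≤ center R T) (hstem : S ≤ derivedSeries R T 1)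
    {f : B →ₗ⁅R⁆ T} (hf : γ.comp f = β) :
    ∃ X : LieIdeal R B, IsStemDenominator_s7 A X ∧ X ≤ f.ker ∧
      ∃ fbar : B ⧸ X →ₗ⁅R⁆ T,
        fbar.comp X.quotMk = f ∧
        Function.Surjective fbar ∧
        (∀ b : B, γ (fbar (X.quotMk b)) = β b) ∧
        LieIdeal.map fbar (LieIdeal.map X.quotMk A) = S := by
  subst hf hS
  have hfsurj : Function.Surjective f := surjective_of_comp_surjective_of_ker_le hβ hcentral hstem
  obtain rfl : γ.ker.comap f = A := hA
  obtain ⟨X, hXf, hX⟩ := exists_isStemDenominator_le (lie_comap_top_le_ker f hcentral)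
    (LieHom.ker_le_comap f γ.ker) (comap_eq_comap_inf_derivedSeries_sup_ker hfsurj hstem)
  have hcomp := lieQuotientLift_comp_quotMk X f hXf
  refine ⟨X, hX, hXf, lieQuotientLift X f hXf, hcomp, ?_, fun b ↦ rfl, ?_⟩
  · exact Function.Surjective.of_comp (g := X.quotMk) hfsurj
  · rw [lieIdeal_map_map, hcomp, LieIdeal.map_comap_eq (f.isIdealMorphism_of_surjective hfsurj),
      f.idealRange_eq_top_of_surjective hfsurj, top_inf_eq]

end StemDenominator

/-- **Theorem 2.5, purely even case.**
Let `L` be a finite-dimensional Lie algebra over a field of characteristic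
different from `2` and `3`, let `0 → A → B → L → 0` be an extension of `L`,
let `0 → S → T → L → 0` be a stem extension of `L` and let `f : B → T` be a
homomorphism of extensions (`γ ∘ f = β`).  Then there is a stem denominator
`X` of the extension `0 → A → B → L → 0` with `f(X) = 0`, such that the map
`f̄ : B/X → T` induced by `f` is a surjective homomorphism of extensions:
`f̄ ∘ mk = f`, `γ ∘ f̄ = β̄` (i.e. `γ(f̄(b + X)) = β(b)` for all `b`) and `f̄`
maps `A/X` onto `S`. -/
theorem stmt_7 (K : Type*) [Field K] (h2 : (2 : K) ≠ 0) (h3 : (3 : K) ≠ 0)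
    (L B T : Type*) [LieRing L] [LieAlgebra K L] [LieRing B] [LieAlgebra K B]
    [LieRing T] [LieAlgebra K T] [FiniteDimensional K L]
    (β : B →ₗ⁅K⁆ L) (hβ : Function.Surjective β)
    (A : LieIdeal K B) (hA : β.ker = A)
    (γ : T →ₗ⁅K⁆ L) (hγ : Function.Surjective γ)
    (S : LieIdeal K T) (hS : γ.ker = S)
    (hcentral : S ≤ LieAlgebra.center K T)
    (hstem : S ≤ LieAlgebra.derivedSeries K T 1)
    (f : B →ₗ⁅K⁆ T) (hf : γ.comp f = β) :
    ∃ X : LieIdeal K B,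
      ⁅A, (⊤ : LieIdeal K B)⁆ ≤ X ∧ X ≤ A ∧
      A = (A ⊓ LieAlgebra.derivedSeries K B 1) ⊔ X ∧
      LieAlgebra.derivedSeries K B 1 ⊓ X = ⁅A, (⊤ : LieIdeal K B)⁆ ∧
      X ≤ f.ker ∧
      ∃ fbar : B ⧸ X →ₗ⁅K⁆ T,
        fbar.comp X.quotMk = f ∧
        Function.Surjective fbar ∧
        (∀ b : B, γ (fbar (X.quotMk b)) = β b) ∧
        LieIdeal.map fbar (LieIdeal.map X.quotMk A) = S := by
  obtain ⟨X, ⟨hAX, hXA, hsup, hinf⟩, hX⟩ := stmt_7_general hβ hA hS hcentral hstem hf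
  exact ⟨X, hAX, hXA, hsup, hinf, hX⟩
end

section
/- Let L be a finite-dimensional Lie algebra over a field of characteristic different from 2 and 3, let 0 → R → F →π L → 0 be a free presentation of L and let 0 → S → T →γ L → 0 be a stem extension of L. Then there exist a Lie algebra homomorphism f : F → T and a stem denominator X of the free presentation such that f(X) = 0 and the induced map f̄ : F/X → T is a surjective homomorphism of extensions: γ ∘ f̄ = π̄ and f̄ maps R/X onto S. -/
/-!
Since `F` is free, `π` lifts through `γ` to `f : F → T`, so `T = f(F) + S`. As `S` is central,
brackets in `T` depend only on the `f(F)`-parts, whence `[T, T] = f([F, F])`. This contains `S`, so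
`f` is onto and `R ⊆ [F, F] + ker f`. Centrality of `S` also gives `[R, F] ⊆ ker f ⊆ R`. Any linear
complement of `[F, F] ∩ ker f` in `ker f` relative to `[R, F]` is then an ideal, and by the modular
law it is a stem denominator on which `f` vanishes.
-/

open Function

section

variable {R F T L : Type*} [CommRing R] [LieRing F] [LieAlgebra R F] [LieRing T] [LieAlgebra R T]
  [LieRing L] [LieAlgebra R L]

theorem exists_freeLieAlgebra_lift_of_surjective {ι : Type*} (π : FreeLieAlgebra R ι →ₗ⁅R⁆ L)
    {γ : T →ₗ⁅R⁆ L} (hγ : Surjective γ) :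
    ∃ f : FreeLieAlgebra R ι →ₗ⁅R⁆ T, γ.comp f = π := by
  choose g hg using hγ
  refine ⟨FreeLieAlgebra.lift R fun i ↦ g (π (FreeLieAlgebra.of R i)), ?_⟩
  ext i
  simp [hg]

theorem quotMk_surjective (I : LieIdeal R F) : Surjective I.quotMk :=
  Submodule.mkQ_surjective I.toSubmodule

theorem exists_comp_quotMk_eq {f : F →ₗ⁅R⁆ T} {I : LieIdeal R F} (hI : I ≤ f.ker) :
    ∃ fbar : F ⧸ I →ₗ⁅R⁆ T, fbar.comp I.quotMk = f := by
  refine ⟨{ I.toSubmodule.liftQ (f : F →ₗ[R] T) hI with map_lie' := ?_ }, rfl⟩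
  intro x y
  obtain ⟨x, rfl⟩ := quotMk_surjective I x
  obtain ⟨y, rfl⟩ := quotMk_surjective I y
  exact f.map_lie x y

theorem lieIdeal_map_map_of_surjective {f : F →ₗ⁅R⁆ T} (hf : Surjective f) (g : T →ₗ⁅R⁆ L)
    (I : LieIdeal R F) : (I.map f).map g = I.map (g.comp f) := by
  refine le_antisymm (LieIdeal.map_le_iff_le_comap.2 fun t ht ↦ ?_)
    (LieIdeal.map_le_iff_le_comap.2 fun x hx ↦ LieIdeal.mem_map (LieIdeal.mem_map hx))
  obtain ⟨x, rfl⟩ := LieIdeal.mem_map_of_surjective hf ht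
  exact LieIdeal.mem_map (f := g.comp f) x.2

theorem lieIdeal_map_ker_comp_of_surjective {f : F →ₗ⁅R⁆ T} (hf : Surjective f) (g : T →ₗ⁅R⁆ L) :
    (g.comp f).ker.map f = g.ker := by
  change (g.ker.comap f).map f = g.ker
  rw [LieIdeal.map_comap_eq (f.isIdealMorphism_of_surjective hf),
    f.idealRange_eq_top_of_surjective hf, top_inf_eq]

theorem lie_ker_comp_top_le_ker {g : T →ₗ⁅R⁆ L} (hg : g.ker ≤ LieAlgebra.center R T)
    (f : F →ₗ⁅R⁆ T) : ⁅(g.comp f).ker, (⊤ : LieIdeal R F)⁆ ≤ f.ker := by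
  rw [LieSubmodule.lie_comm, LieSubmodule.lie_le_iff]
  intro x _ r hr
  rw [LieHom.mem_ker, f.map_lie]
  exact hg hr (f x)

theorem exists_sub_mem_ker_of_comp_surjective {g : T →ₗ⁅R⁆ L} {f : F →ₗ⁅R⁆ T}
    (h : Surjective (g.comp f)) (t : T) : ∃ x, t - f x ∈ g.ker := by
  obtain ⟨x, hx⟩ := h (g t)
  exact ⟨x, by rw [LieHom.mem_ker, map_sub, ← hx, LieHom.comp_apply, sub_self]⟩

theorem lie_eq_lie_of_sub_mem_center {x x' y y' : T} (hx : x - x' ∈ LieAlgebra.center R T)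
    (hy : y - y' ∈ LieAlgebra.center R T) : ⁅x, y⁆ = ⁅x', y'⁆ := by
  have hy' : ⁅x, y - y'⁆ = 0 := hy x
  have hx' : ⁅y', x - x'⁆ = 0 := hx y'
  rw [← lie_skew, neg_eq_zero, sub_lie, sub_eq_zero] at hx'
  rw [lie_sub, sub_eq_zero] at hy'
  exact hy'.trans hx'

theorem derivedSeries_one_le_map {f : F →ₗ⁅R⁆ T}
    (hf : ∀ t, ∃ x, t - f x ∈ LieAlgebra.center R T) :
    (LieAlgebra.derivedSeries R T 1).toSubmodule ≤
      (LieAlgebra.derivedSeries R F 1).toSubmodule.map (f : F →ₗ[R] T) := by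
  refine (LieAlgebra.coe_derivedSeries_one_eq R T).trans_le (Submodule.span_le.2 ?_)
  rintro _ ⟨s, t, rfl⟩
  obtain ⟨x, hx⟩ := hf s
  obtain ⟨y, hy⟩ := hf t
  exact ⟨⁅x, y⁆, LieSubmodule.lie_mem_lie (LieSubmodule.mem_top x) (LieSubmodule.mem_top y),
    (f.map_lie x y).trans (lie_eq_lie_of_sub_mem_center hx hy).symm⟩

/-- A homomorphism is stem if its kernel is central and contained in the derived ideal.
A stem extension `0 → S → T → L → 0` is a surjective stem homomorphism `T → L`; surjectivity is
kept apart. -/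
structure IsStem (γ : T →ₗ⁅R⁆ L) : Prop where
  ker_le_center : γ.ker ≤ LieAlgebra.center R T
  ker_le_derivedSeries : γ.ker ≤ LieAlgebra.derivedSeries R T 1

namespace IsStem

variable {γ : T →ₗ⁅R⁆ L} {f : F →ₗ⁅R⁆ T}

theorem exists_mem_derivedSeries_of_mem_ker (hγ : IsStem γ) (hγf : Surjective (γ.comp f))
    {s : T} (hs : s ∈ γ.ker) : ∃ y ∈ LieAlgebra.derivedSeries R F 1, f y = s := by
  refine derivedSeries_one_le_map (fun t ↦ ?_) (hγ.ker_le_derivedSeries hs)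
  exact (exists_sub_mem_ker_of_comp_surjective hγf t).imp fun _ hx ↦ hγ.ker_le_center hx

theorem surjective_of_comp_surjective (hγ : IsStem γ) (hγf : Surjective (γ.comp f)) :
    Surjective f := by
  intro t
  obtain ⟨x, hx⟩ := exists_sub_mem_ker_of_comp_surjective hγf t
  obtain ⟨y, -, hy⟩ := hγ.exists_mem_derivedSeries_of_mem_ker hγf hx
  exact ⟨y + x, by rw [map_add, hy, sub_add_cancel]⟩

theorem ker_comp_le_derivedSeries_sup_ker (hγ : IsStem γ) (hγf : Surjective (γ.comp f)) :
    (γ.comp f).ker ≤ LieAlgebra.derivedSeries R F 1 ⊔ f.ker := by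
  intro r hr
  obtain ⟨y, hyD, hy⟩ := hγ.exists_mem_derivedSeries_of_mem_ker hγf (s := f r) hr
  have hry : r - y ∈ f.ker := by rw [LieHom.mem_ker, map_sub, hy, sub_self]
  exact (LieSubmodule.mem_sup _ _ _).2 ⟨y, hyD, r - y, hry, add_sub_cancel y r⟩

end IsStem

/-- `X` is a stem denominator of `I`: an ideal between `⁅I, F⁆` and `I` that complements
`I ∩ [F, F]` in `I` modulo `⁅I, F⁆`. For a free presentation `π : F → L` with `I = π.ker` this is
the usual notion. -/
structure IsStemDenominator_s9 (I X : LieIdeal R F) : Prop where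
  lie_le : ⁅I, (⊤ : LieIdeal R F)⁆ ≤ X
  le : X ≤ I
  eq_sup : I = (I ⊓ LieAlgebra.derivedSeries R F 1) ⊔ X
  inf_eq : LieAlgebra.derivedSeries R F 1 ⊓ X = ⁅I, (⊤ : LieIdeal R F)⁆

-- If the action maps `c` into `a`, every linear subspace between `a` and `c` is invariant, so a
-- linear relative complement suffices.
theorem exists_lieSubmodule_inf_eq_and_sup_eq {M : Type*} [AddCommGroup M] [Module R M]
    [LieRingModule F M] [IsSemisimpleModule R M] {a b c : LieSubmodule R F M}
    (hab : a ≤ b) (hbc : b ≤ c) (hc : ⁅(⊤ : LieIdeal R F), c⁆ ≤ a) :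
    ∃ X : LieSubmodule R F M, b ⊓ X = a ∧ b ⊔ X = c := by
  obtain ⟨V, hinf, hsup⟩ := IsModularLattice.exists_inf_eq_and_sup_eq
    (a := a.toSubmodule) (b := b.toSubmodule) (c := c.toSubmodule) hab hbc
  have haV : a.toSubmodule ≤ V := hinf ▸ inf_le_right
  have hVc : V ≤ c.toSubmodule := hsup ▸ le_sup_right
  obtain ⟨X, rfl⟩ := (Submodule.exists_lieSubmodule_coe_eq_iff F V).2 fun x _ hv ↦
    haV (hc (LieSubmodule.lie_mem_lie (LieSubmodule.mem_top x) (hVc hv)))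
  exact ⟨X, by simpa only [← LieSubmodule.toSubmodule_inj, LieSubmodule.inf_toSubmodule,
    LieSubmodule.sup_toSubmodule] using And.intro hinf hsup⟩

theorem exists_isStemDenominator_le_s9 [IsSemisimpleModule R F] {I N : LieIdeal R F} (hNI : N ≤ I)
    (hN : ⁅I, (⊤ : LieIdeal R F)⁆ ≤ N) (hI : I ≤ LieAlgebra.derivedSeries R F 1 ⊔ N) :
    ∃ X ≤ N, IsStemDenominator_s9 I X := by
  set D := LieAlgebra.derivedSeries R F 1
  have hD : ⁅I, (⊤ : LieIdeal R F)⁆ ≤ D := LieSubmodule.mono_lie le_top le_rfl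
  have hlieN : ⁅(⊤ : LieIdeal R F), N⁆ ≤ ⁅I, (⊤ : LieIdeal R F)⁆ :=
    (LieSubmodule.lie_comm _ _).trans_le (LieSubmodule.mono_lie hNI le_rfl)
  obtain ⟨X, hinf, hsup⟩ :=
    exists_lieSubmodule_inf_eq_and_sup_eq (le_inf hD hN) inf_le_right hlieN
  have hXN : X ≤ N := hsup ▸ le_sup_right
  refine ⟨X, hXN, hinf ▸ inf_le_right, hXN.trans hNI, ?_, ?_⟩
  · calc
      I = I ⊓ D ⊔ N := by rw [inf_sup_assoc_of_le D hNI, inf_eq_left.2 hI]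
      _ = I ⊓ D ⊔ (D ⊓ N ⊔ X) := by rw [hsup]
      _ = I ⊓ D ⊔ X := by
        rw [← sup_assoc, sup_eq_left.2 (le_inf (inf_le_right.trans hNI) inf_le_left)]
  · rw [← hinf, inf_assoc, inf_eq_right.2 hXN]

end

theorem stmt_9_general {K L T ι : Type*} [CommRing K] [IsSemisimpleRing K]
    [LieRing L] [LieAlgebra K L] [LieRing T] [LieAlgebra K T]
    {π : FreeLieAlgebra K ι →ₗ⁅K⁆ L} (hπ : Surjective π)
    {γ : T →ₗ⁅K⁆ L} (hγ : Surjective γ) (hstem : IsStem γ) :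
    ∃ (f : FreeLieAlgebra K ι →ₗ⁅K⁆ T) (X : LieIdeal K (FreeLieAlgebra K ι)),
      γ.comp f = π ∧ IsStemDenominator_s9 π.ker X ∧ X ≤ f.ker ∧
      ∃ fbar : FreeLieAlgebra K ι ⧸ X →ₗ⁅K⁆ T,
        fbar.comp X.quotMk = f ∧
        Surjective fbar ∧
        (∀ b : FreeLieAlgebra K ι, γ (fbar (X.quotMk b)) = π b) ∧
        (π.ker.map X.quotMk).map fbar = γ.ker := by
  obtain ⟨f, rfl⟩ := exists_freeLieAlgebra_lift_of_surjective π hγ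
  obtain ⟨X, hXf, hX⟩ := exists_isStemDenominator_le_s9 (f.ker_le_comap γ.ker)
    (lie_ker_comp_top_le_ker hstem.ker_le_center f) (hstem.ker_comp_le_derivedSeries_sup_ker hπ)
  obtain ⟨fbar, rfl⟩ := exists_comp_quotMk_eq hXf
  have hf := hstem.surjective_of_comp_surjective hπ
  refine ⟨_, X, rfl, hX, hXf, fbar, rfl, Surjective.of_comp hf, fun _ ↦ rfl, ?_⟩
  rw [lieIdeal_map_map_of_surjective (quotMk_surjective X), lieIdeal_map_ker_comp_of_surjective hf]

/-- **Theorem 2.6, purely even case.**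
Let `L` be a finite-dimensional Lie algebra over a field of characteristic
different from `2` and `3`, let `0 → R → F → L → 0` be a free presentation of
`L` and let `0 → S → T → L → 0` be a stem extension of `L`.  Then there exist
a Lie algebra homomorphism `f : F → T` and a stem denominator `X` of the free
presentation such that `f(X) = 0` and the induced map `f̄ : F/X → T` is a
surjective homomorphism of extensions: `γ ∘ f̄ = π̄` and `f̄` maps `R/X`
onto `S`. -/
theorem stmt_9 (K : Type*) [Field K] (h2 : (2 : K) ≠ 0) (h3 : (3 : K) ≠ 0)
    (L T : Type*) [LieRing L] [LieAlgebra K L] [LieRing T] [LieAlgebra K T]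
    [FiniteDimensional K L]
    (ι : Type*)
    (π : FreeLieAlgebra K ι →ₗ⁅K⁆ L) (hπ : Function.Surjective π)
    (R : LieIdeal K (FreeLieAlgebra K ι)) (hR : π.ker = R)
    (γ : T →ₗ⁅K⁆ L) (hγ : Function.Surjective γ)
    (S : LieIdeal K T) (hS : γ.ker = S)
    (hcentral : S ≤ LieAlgebra.center K T)
    (hstem : S ≤ LieAlgebra.derivedSeries K T 1) :
    ∃ (f : FreeLieAlgebra K ι →ₗ⁅K⁆ T)
      (X : LieIdeal K (FreeLieAlgebra K ι)),
      γ.comp f = π ∧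
      ⁅R, (⊤ : LieIdeal K (FreeLieAlgebra K ι))⁆ ≤ X ∧ X ≤ R ∧
      R = (R ⊓ LieAlgebra.derivedSeries K (FreeLieAlgebra K ι) 1) ⊔ X ∧
      LieAlgebra.derivedSeries K (FreeLieAlgebra K ι) 1 ⊓ X =
        ⁅R, (⊤ : LieIdeal K (FreeLieAlgebra K ι))⁆ ∧
      X ≤ f.ker ∧
      ∃ fbar : FreeLieAlgebra K ι ⧸ X →ₗ⁅K⁆ T,
        fbar.comp X.quotMk = f ∧
        Function.Surjective fbar ∧
        (∀ b : FreeLieAlgebra K ι, γ (fbar (X.quotMk b)) = π b) ∧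
        LieIdeal.map fbar (LieIdeal.map X.quotMk R) = S := by
  subst hR hS
  obtain ⟨f, X, hf, hX, hfX⟩ := stmt_9_general hπ hγ ⟨hcentral, hstem⟩
  exact ⟨f, X, hf, hX.lie_le, hX.le, hX.eq_sup, hX.inf_eq, hfX⟩
end

section
/- Every finite-dimensional Lie algebra L over a field of characteristic different from 2 and 3 admits a maximal stem extension: there exists a stem extension 0 → M → C → L → 0 such that dim M ≥ dim S for every stem extension 0 → S → T → L → 0 of L. -/
universe u

/-- A stem extension of the Lie algebra `L` over the field `K`:
a surjective Lie algebra homomorphism `γ : T → L` whose kernel is contained in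
the center of `T` and in the derived subalgebra `[T,T]`. -/
structure StemExtension (K L : Type u) [Field K] [LieRing L] [LieAlgebra K L] where
  T : Type u
  [instLieRing : LieRing T]
  [instLieAlgebra : LieAlgebra K T]
  γ : T →ₗ⁅K⁆ L
  surj : Function.Surjective γ
  central : γ.ker ≤ LieAlgebra.center K T
  stem : γ.ker ≤ LieAlgebra.derivedSeries K T 1

attribute [instance] StemExtension.instLieRing StemExtension.instLieAlgebra

/-!
In a central extension `f : T → L` the bracket of `T` depends only on the images in `L` of its
arguments, so `[T, T]` is a linear quotient of `L ⊗ L`. If `L` is finite-dimensional, the kernel of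
a stem extension, being contained in `[T, T]`, thus has dimension at most `(dim L)²`. Kernel
dimensions of stem extensions are therefore bounded natural numbers, and the identity of `L` is a
stem extension, so the largest one is attained.
-/

open Function Module
open scoped TensorProduct

section CentralExtension

variable {R T L : Type*} [CommRing R] [LieRing T] [LieAlgebra R T] [LieRing L] [LieAlgebra R L]
  {f : T →ₗ⁅R⁆ L}

theorem lie_eq_zero_of_ker_le_center (hcentral : f.ker ≤ LieAlgebra.center R T) {z : T}
    (hz : f z = 0) (x : T) : ⁅x, z⁆ = 0 :=
  (LieModule.mem_maxTrivSubmodule R T T z).1 (hcentral (f.mem_ker.2 hz)) x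

theorem lie_congr_of_ker_le_center (hcentral : f.ker ≤ LieAlgebra.center R T) {x x' y y' : T}
    (hx : f x = f x') (hy : f y = f y') : ⁅x, y⁆ = ⁅x', y'⁆ := by
  have h_right : ⁅x, y - y'⁆ = 0 :=
    lie_eq_zero_of_ker_le_center hcentral (by rw [map_sub, hy, sub_self]) x
  have h_left : ⁅y', x - x'⁆ = 0 :=
    lie_eq_zero_of_ker_le_center hcentral (by rw [map_sub, hx, sub_self]) y'
  rw [lie_sub, sub_eq_zero] at h_right h_left
  rw [h_right, ← lie_skew, h_left, lie_skew]

/-- The linear map `L ⊗ L → T`, `f x ⊗ f y ↦ ⁅x, y⁆`, attached to a central extension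
`f : T → L`. It is defined through a set-theoretic section of `f`: brackets do not depend on the
chosen preimages, which is what makes the map bilinear. -/
noncomputable def centralCommutator (hsurj : Surjective f)
    (hcentral : f.ker ≤ LieAlgebra.center R T) : L ⊗[R] L →ₗ[R] T :=
  TensorProduct.lift <| LinearMap.mk₂ R (fun x y ↦ ⁅surjInv hsurj x, surjInv hsurj y⁆)
    (fun x x' y ↦ by
      rw [← add_lie]
      exact lie_congr_of_ker_le_center hcentral (by simp only [map_add, surjInv_eq]) rfl)
    (fun c x y ↦ by
      rw [← smul_lie]
      exact lie_congr_of_ker_le_center hcentral (by simp only [map_smul, surjInv_eq]) rfl)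
    (fun x y y' ↦ by
      rw [← lie_add]
      exact lie_congr_of_ker_le_center hcentral rfl (by simp only [map_add, surjInv_eq]))
    (fun c x y ↦ by
      rw [← lie_smul]
      exact lie_congr_of_ker_le_center hcentral rfl (by simp only [map_smul, surjInv_eq]))

theorem centralCommutator_tmul (hsurj : Surjective f) (hcentral : f.ker ≤ LieAlgebra.center R T)
    (x y : T) : centralCommutator hsurj hcentral (f x ⊗ₜ f y) = ⁅x, y⁆ :=
  lie_congr_of_ker_le_center hcentral (surjInv_eq hsurj _) (surjInv_eq hsurj _)

theorem range_centralCommutator (hsurj : Surjective f) (hcentral : f.ker ≤ LieAlgebra.center R T) :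
    LinearMap.range (centralCommutator hsurj hcentral) =
      (LieAlgebra.derivedSeries R T 1).toSubmodule := by
  refine Eq.trans ?_ (LieAlgebra.coe_derivedSeries_one_eq R T).symm
  rw [LinearMap.range_eq_map, ← TensorProduct.span_tmul_eq_top, Submodule.map_span]
  congr 1
  ext z
  constructor
  · rintro ⟨_, ⟨a, b, rfl⟩, rfl⟩
    obtain ⟨x, rfl⟩ := hsurj a
    obtain ⟨y, rfl⟩ := hsurj b
    exact ⟨x, y, (centralCommutator_tmul hsurj hcentral x y).symm⟩
  · rintro ⟨x, y, rfl⟩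
    exact ⟨f x ⊗ₜ f y, ⟨f x, f y, rfl⟩, centralCommutator_tmul hsurj hcentral x y⟩

end CentralExtension

namespace StemExtension

variable {K L : Type u} [Field K] [LieRing L] [LieAlgebra K L]

theorem ker_le_range_centralCommutator (E : StemExtension K L) :
    E.γ.ker.toSubmodule ≤ LinearMap.range (centralCommutator E.surj E.central) :=
  range_centralCommutator E.surj E.central ▸ E.stem

instance finiteDimensional_ker [FiniteDimensional K L] (E : StemExtension K L) :
    FiniteDimensional K E.γ.ker :=
  Submodule.finiteDimensional_of_le E.ker_le_range_centralCommutator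

theorem finrank_ker_le_sq [FiniteDimensional K L] (E : StemExtension K L) :
    finrank K E.γ.ker ≤ finrank K L ^ 2 :=
  calc finrank K E.γ.ker
    _ ≤ finrank K (LinearMap.range (centralCommutator E.surj E.central)) :=
      Submodule.finrank_mono E.ker_le_range_centralCommutator
    _ ≤ finrank K (L ⊗[K] L) := LinearMap.finrank_range_le _
    _ = finrank K L ^ 2 := by rw [finrank_tensorProduct, sq]

instance : Nonempty (StemExtension K L) :=
  have ker_id : (LieHom.id : L →ₗ⁅K⁆ L).ker = ⊥ := (LieHom.ker_eq_bot _).2 injective_id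
  ⟨{ T := L
     γ := LieHom.id
     surj := surjective_id
     central := ker_id.trans_le bot_le
     stem := ker_id.trans_le bot_le }⟩

end StemExtension

theorem stmt_12_general (K : Type u) [Field K] (L : Type u) [LieRing L] [LieAlgebra K L]
    [FiniteDimensional K L] :
    ∃ E : StemExtension K L,
      ∀ E' : StemExtension K L,
        Module.rank K E'.γ.ker ≤ Module.rank K E.γ.ker := by
  let kerDims : Set ℕ := Set.range fun E : StemExtension K L ↦ finrank K E.γ.ker
  have h_bdd : BddAbove kerDims :=
    ⟨finrank K L ^ 2, Set.forall_mem_range.2 StemExtension.finrank_ker_le_sq⟩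
  obtain ⟨_, ⟨E, rfl⟩, h_max⟩ := h_bdd.exists_isGreatest_of_nonempty (Set.range_nonempty _)
  refine ⟨E, fun E' ↦ ?_⟩
  rw [← finrank_eq_rank, ← finrank_eq_rank, Nat.cast_le]
  exact h_max (Set.mem_range_self E')

/-- **Existence of maximal stem extensions (multipliers and covers), purely
even case.**  Every finite-dimensional Lie algebra `L` over a field of
characteristic different from `2` and `3` admits a maximal stem extension
`0 → M → C → L → 0`: a stem extension whose kernel `M` satisfies
`dim S ≤ dim M` for every stem extension `0 → S → T → L → 0` of `L`. -/
theorem stmt_12 (K : Type u) [Field K] (h2 : (2 : K) ≠ 0) (h3 : (3 : K) ≠ 0)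
    (L : Type u) [LieRing L] [LieAlgebra K L] [FiniteDimensional K L] :
    ∃ E : StemExtension K L,
      ∀ E' : StemExtension K L,
        Module.rank K E'.γ.ker ≤ Module.rank K E.γ.ker :=
  stmt_12_general K L
end

section
/- Let A₁, A₂, B₁, B₂ be Lie algebras over a field of characteristic different from 2 and 3 such that A₁ and A₂ are finite-dimensional, A₁ ≅ A₂ as Lie algebras, and A₁ × B₁ ≅ A₂ × B₂ as Lie algebras (product with componentwise bracket). Then B₁ ≅ B₂ as Lie algebras. -/
/-- The direct product of two Lie rings, with componentwise bracket. -/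
instance Prod.instLieRing (L M : Type*) [LieRing L] [LieRing M] : LieRing (L × M) where
  bracket x y := (⁅x.1, y.1⁆, ⁅x.2, y.2⁆)
  add_lie x y z := by
    show (⁅x.1 + y.1, z.1⁆, ⁅x.2 + y.2, z.2⁆) =
      (⁅x.1, z.1⁆, ⁅x.2, z.2⁆) + (⁅y.1, z.1⁆, ⁅y.2, z.2⁆)
    simp [add_lie]
  lie_add x y z := by
    show (⁅x.1, y.1 + z.1⁆, ⁅x.2, y.2 + z.2⁆) =
      (⁅x.1, y.1⁆, ⁅x.2, y.2⁆) + (⁅x.1, z.1⁆, ⁅x.2, z.2⁆)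
    simp [lie_add]
  lie_self x := by
    show (⁅x.1, x.1⁆, ⁅x.2, x.2⁆) = 0
    simp
  leibniz_lie x y z := by
    show (⁅x.1, ⁅y.1, z.1⁆⁆, ⁅x.2, ⁅y.2, z.2⁆⁆) =
      (⁅⁅x.1, y.1⁆, z.1⁆, ⁅⁅x.2, y.2⁆, z.2⁆) + (⁅y.1, ⁅x.1, z.1⁆⁆, ⁅y.2, ⁅x.2, z.2⁆⁆)
    simp only [Prod.mk_add_mk, Prod.mk.injEq]
    exact ⟨leibniz_lie _ _ _, leibniz_lie _ _ _⟩

/-- The direct product of two Lie algebras, with componentwise bracket. -/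
instance Prod.instLieAlgebra (K L M : Type*) [CommRing K] [LieRing L] [LieAlgebra K L]
    [LieRing M] [LieAlgebra K M] : LieAlgebra K (L × M) where
  lie_smul t x y := by
    show (⁅x.1, t • y.1⁆, ⁅x.2, t • y.2⁆) = t • (⁅x.1, y.1⁆, ⁅x.2, y.2⁆)
    simp [lie_smul]

/-!
Let `φ : A × B₁ ≅ A × B₂`. The round trips `A → A × B₁ ≅ A × B₂ → A → A × B₂ ≅ A × B₁ → A` and
`A → A × B₁ ≅ A × B₂ → B₂ → A × B₂ ≅ A × B₁ → A` add up to the identity of `A`, and the first one,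
`f`, commutes with the adjoint action, so its Fitting decomposition `A = I ⊕ J` consists of ideals.

* If `I = 0`, then `f` is injective, hence so is the diagonal block `A → A` of `φ`. Then `A × 0` and
  `φ⁻¹(0 × B₂)` are complementary ideals, so `B₁ ≅ (A × B₁) / (A × 0) ≅ B₂`.
* If `J = 0`, then `1 - f` is injective. It factors as `A → B₂ → A`, so with `D` the kernel of
  `B₂ → A` one gets `B₂ ≅ A × D`, and also `B₁ ≅ A × D` since `φ⁻¹(A × D)` is complementary
  to `A × 0`.
* Otherwise `I` and `J` are shorter than `A` and can be cancelled one after the other.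
-/

section LinearMap

variable {R A B C D L : Type*} [Ring R] [AddCommGroup A] [Module R A] [AddCommGroup B] [Module R B]
  [AddCommGroup C] [Module R C] [AddCommGroup D] [Module R D] [AddCommGroup L] [Module R L]

theorem bijective_comp_of_exact_of_bijective_comp {i : A →ₗ[R] L} {p : L →ₗ[R] B} {j : C →ₗ[R] L}
    {q : L →ₗ[R] D} (hip : Function.Exact i p) (hp : Function.Surjective p)
    (hj : Function.Injective j) (hjq : Function.Exact j q) (hqi : Function.Bijective (q ∘ₗ i)) :
    Function.Bijective (p ∘ₗ j) := by
  constructor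
  · refine (injective_iff_map_eq_zero _).2 fun c hc ↦ ?_
    obtain ⟨a, ha⟩ := (hip (j c)).1 hc
    have hqia : (q ∘ₗ i) a = 0 := by
      rw [LinearMap.comp_apply, ha, hjq.apply_apply_eq_zero]
    have ha0 : a = 0 := (map_eq_zero_iff _ hqi.injective).1 hqia
    exact (map_eq_zero_iff j hj).1 (by rw [← ha, ha0, map_zero])
  · intro b
    obtain ⟨l, rfl⟩ := hp b
    obtain ⟨a, ha⟩ := hqi.surjective (q l)
    obtain ⟨c, hc⟩ := (hjq (l - i a)).1 (by rw [map_sub, ← ha, LinearMap.comp_apply, sub_self])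
    exact ⟨c, by rw [LinearMap.comp_apply, hc, map_sub, hip.apply_apply_eq_zero, sub_zero]⟩

theorem isCompl_range_ker_of_bijective_comp {c : A →ₗ[R] B} {b : B →ₗ[R] D}
    (h : Function.Bijective (b ∘ₗ c)) : IsCompl (LinearMap.range c) (LinearMap.ker b) := by
  constructor
  · rw [Submodule.disjoint_def]
    rintro _ ⟨a, rfl⟩ ha
    rw [(map_eq_zero_iff (b ∘ₗ c) h.injective).1 ha, map_zero]
  · rw [Submodule.codisjoint_iff_exists_add_eq]
    intro y
    obtain ⟨a, ha⟩ := h.surjective (b y)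
    refine ⟨c a, y - c a, ⟨a, rfl⟩, ?_, add_sub_cancel _ _⟩
    rw [LinearMap.mem_ker, map_sub, ← ha, LinearMap.comp_apply, sub_self]

theorem bijective_coprod_of_isCompl_range {f : A →ₗ[R] L} {g : B →ₗ[R] L}
    (hf : Function.Injective f) (hg : Function.Injective g)
    (h : IsCompl (LinearMap.range f) (LinearMap.range g)) :
    Function.Bijective (f.coprod g) := by
  constructor
  · rw [← LinearMap.ker_eq_bot, LinearMap.ker_coprod_of_disjoint_range f g h.disjoint,
      LinearMap.ker_eq_bot.2 hf, LinearMap.ker_eq_bot.2 hg, Submodule.prod_bot]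
  · rw [← LinearMap.range_eq_top, LinearMap.range_coprod, h.sup_eq_top]

end LinearMap

theorem exists_isCompl_lieSubmodule_of_lieModuleHom {R L M : Type*} [CommRing R] [LieRing L]
    [LieAlgebra R L] [AddCommGroup M] [Module R M] [LieRingModule L M] [LieModule R L M]
    [IsNoetherian R M] [IsArtinian R M] (f : M →ₗ⁅R,L⁆ M) :
    ∃ N P : LieSubmodule R L M,
      IsCompl N P ∧ (∀ m, f m = 0 → m ∈ N) ∧ (∀ m, f m = m → m ∈ P) := by
  let g : Module.End R M := f
  obtain ⟨n, hn, hn1⟩ := (g.eventually_isCompl_ker_pow_range_pow.and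
    (Filter.eventually_ge_atTop 1)).exists
  have hg (x : L) (m : M) : (g ^ n) ⁅x, m⁆ = ⁅x, (g ^ n) m⁆ := by
    have hcomm : Commute (LieModule.toEnd R L M x) g := LinearMap.ext fun m ↦ (f.map_lie x m).symm
    exact (LinearMap.congr_fun (hcomm.pow_right n).eq m).symm
  let N : LieSubmodule R L M :=
    { LinearMap.ker (g ^ n) with
      lie_mem := fun {x m} (hm : (g ^ n) m = 0) ↦
        show (g ^ n) ⁅x, m⁆ = 0 by rw [hg, hm, lie_zero] }
  let P : LieSubmodule R L M :=
    { LinearMap.range (g ^ n) with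
      lie_mem := by
        rintro x _ ⟨m, rfl⟩
        exact ⟨⁅x, m⁆, hg x m⟩ }
  refine ⟨N, P, LieSubmodule.isCompl_toSubmodule.1 hn, fun m hm ↦ ?_, fun m hm ↦ ?_⟩
  · exact Module.End.pow_map_zero_of_le hn1 (by rwa [pow_one])
  · refine ⟨m, ?_⟩
    rw [Module.End.pow_apply]
    exact Function.IsFixedPt.iterate hm n

-- The instances that `LieHom.fst`, `LieHom.inl`, … carry on products are those of
-- `LieAlgebra.Prod`, definitionally equal to the ones above.
section LieAlgebra

variable {R A A₁ A₂ A' B B₁ B₂ B' C D L : Type*} [CommRing R]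
  [LieRing A] [LieAlgebra R A] [LieRing A₁] [LieAlgebra R A₁] [LieRing A₂] [LieAlgebra R A₂]
  [LieRing A'] [LieAlgebra R A'] [LieRing B] [LieAlgebra R B] [LieRing B₁] [LieAlgebra R B₁]
  [LieRing B₂] [LieAlgebra R B₂] [LieRing B'] [LieAlgebra R B'] [LieRing C] [LieAlgebra R C]
  [LieRing D] [LieAlgebra R D] [LieRing L] [LieAlgebra R L]

/-- The product of two isomorphisms of Lie algebras. -/
def lieProdCongr (e : A ≃ₗ⁅R⁆ A') (f : B ≃ₗ⁅R⁆ B') : (A × B) ≃ₗ⁅R⁆ (A' × B') :=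
  { LieHom.prodMap e.toLieHom f.toLieHom, e.toLinearEquiv.prodCongr f.toLinearEquiv with }

variable (R A B C) in
/-- Associativity of the direct product of Lie algebras. -/
def lieProdAssoc : ((A × B) × C) ≃ₗ⁅R⁆ (A × (B × C)) :=
  { LinearEquiv.prodAssoc R A B C with map_lie' := rfl }

variable (R A B) in
/-- A direct factor with at most one element can be dropped. -/
noncomputable def lieSubsingletonProd [Subsingleton A] : (A × B) ≃ₗ⁅R⁆ B :=
  LieEquiv.ofBijective (LieHom.snd R A B)
    ⟨fun _ _ h ↦ Prod.ext (Subsingleton.elim _ _) h, LieHom.snd_surjective⟩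

/-- Two embeddings of Lie algebras with commuting, complementary ranges identify the target with
the direct product of the sources. -/
noncomputable def lieProdEquivOfIsComplRange (f : A →ₗ⁅R⁆ L) (g : B →ₗ⁅R⁆ L)
    (hf : Function.Injective f) (hg : Function.Injective g) (hfg : ∀ a b, ⁅f a, g b⁆ = 0)
    (h : IsCompl (LinearMap.range (f : A →ₗ[R] L)) (LinearMap.range (g : B →ₗ[R] L))) :
    (A × B) ≃ₗ⁅R⁆ L :=
  LieEquiv.ofBijective
    { (f : A →ₗ[R] L).coprod (g : B →ₗ[R] L) with
      map_lie' := fun {x y} ↦ by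
        have hgf : ⁅g x.2, f y.1⁆ = 0 := by rw [← lie_skew, hfg, neg_zero]
        simp [hfg, hgf] }
    (bijective_coprod_of_isCompl_range hf hg h)

theorem nonempty_prod_lieEquiv_of_isCompl {I J : LieIdeal R L} (h : IsCompl I J) :
    Nonempty ((I × J) ≃ₗ⁅R⁆ L) := by
  refine ⟨lieProdEquivOfIsComplRange I.incl J.incl I.incl_injective J.incl_injective ?_ ?_⟩
  · intro x y
    have hxy : ⁅(x : L), (y : L)⁆ ∈ I ⊓ J :=
      ⟨lie_mem_left R L I x y x.2, lie_mem_right R L J x y y.2⟩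
    simpa [h.inf_eq_bot] using hxy
  · have hI : LinearMap.range (I.incl : I →ₗ[R] L) = I.toSubmodule := I.toSubmodule.range_subtype
    have hJ : LinearMap.range (J.incl : J →ₗ[R] L) = J.toSubmodule := J.toSubmodule.range_subtype
    rw [hI, hJ]
    exact LieSubmodule.isCompl_toSubmodule.2 h

theorem nonempty_prod_ker_lieEquiv_of_bijective_comp (c : A →ₗ⁅R⁆ B) (b : B →ₗ⁅R⁆ D)
    (hbc : Function.Bijective (b ∘ c)) (hc : ∀ a, ∀ y ∈ b.ker, ⁅c a, y⁆ = 0) :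
    Nonempty ((A × b.ker) ≃ₗ⁅R⁆ B) := by
  refine ⟨lieProdEquivOfIsComplRange c b.ker.incl hbc.injective.of_comp b.ker.incl_injective
    (fun a y ↦ hc a y y.2) ?_⟩
  have hker : LinearMap.range (b.ker.incl : b.ker →ₗ[R] B) = LinearMap.ker (b : B →ₗ[R] D) :=
    b.ker.toSubmodule.range_subtype
  rw [hker]
  exact isCompl_range_ker_of_bijective_comp (c := (c : A →ₗ[R] B)) (b := (b : B →ₗ[R] D)) hbc

-- `C` and `B` are both quotients of `L` by the image of `A × 0`, which is complementary to `ker q`.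
theorem nonempty_lieEquiv_of_exact_of_bijective (φ : (A × B) ≃ₗ⁅R⁆ L) {j : C →ₗ⁅R⁆ L}
    {q : L →ₗ⁅R⁆ D} (hj : Function.Injective j) (hjq : Function.Exact j q)
    (hq : Function.Bijective fun a ↦ q (φ (a, 0))) : Nonempty (C ≃ₗ⁅R⁆ B) := by
  let i : A →ₗ[R] L := φ.toLinearEquiv ∘ₗ LinearMap.inl R A B
  let p : L →ₗ[R] B := LinearMap.snd R A B ∘ₗ φ.toLinearEquiv.symm
  have hip : Function.Exact i p :=
    (LinearEquiv.conj_exact_iff_exact (LinearMap.inl R A B) (LinearMap.snd R A B) φ.toLinearEquiv).2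
      Function.Exact.inl_snd
  have hp : Function.Surjective p := (LinearMap.snd_surjective (R := R)).comp φ.symm.surjective
  exact ⟨LieEquiv.ofBijective ((LieHom.snd R A B).comp (φ.symm.toLieHom.comp j))
    (bijective_comp_of_exact_of_bijective_comp (j := (j : C →ₗ[R] L)) (q := (q : L →ₗ[R] D))
      hip hp hj hjq hq)⟩

theorem nonempty_lieEquiv_of_bijective_fst (φ : (A₁ × B₁) ≃ₗ⁅R⁆ (A₂ × B₂))
    (h : Function.Bijective fun a ↦ (φ (a, 0)).1) : Nonempty (B₁ ≃ₗ⁅R⁆ B₂) :=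
  (nonempty_lieEquiv_of_exact_of_bijective φ (j := LieHom.inr R A₂ B₂) (q := LieHom.fst R A₂ B₂)
    LieHom.inr_injective Function.Exact.inr_fst h).map LieEquiv.symm

theorem nonempty_prod_ker_lieEquiv_of_bijective_snd (φ : (A₁ × B₁) ≃ₗ⁅R⁆ (A₂ × B₂))
    (b : B₂ →ₗ⁅R⁆ D) (h : Function.Bijective fun a ↦ b (φ (a, 0)).2) :
    Nonempty ((A₂ × b.ker) ≃ₗ⁅R⁆ B₁) := by
  refine nonempty_lieEquiv_of_exact_of_bijective φ
    (j := LieHom.prodMap LieHom.id b.ker.incl) (q := b.comp (LieHom.snd R A₂ B₂)) ?_ ?_ h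
  · exact Function.injective_id.prodMap b.ker.incl_injective
  · rintro ⟨x, y⟩
    simp [LieHom.mem_ker]

theorem nonempty_lieEquiv_of_bijective_fst_symm_snd (φ : (A × B₁) ≃ₗ⁅R⁆ (A × B₂))
    (h : Function.Bijective fun a ↦ (φ.symm (0, (φ (a, 0)).2)).1) : Nonempty (B₁ ≃ₗ⁅R⁆ B₂) := by
  let c : A →ₗ⁅R⁆ B₂ := (LieHom.snd R A B₂).comp (φ.toLieHom.comp (LieHom.inl R A B₁))
  let b : B₂ →ₗ⁅R⁆ A := (LieHom.fst R A B₁).comp (φ.symm.toLieHom.comp (LieHom.inr R A B₂))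
  have hcb (a : A) (y : B₂) (hy : y ∈ b.ker) : ⁅c a, y⁆ = 0 := by
    have hy0 : (φ.symm (0, y)).1 = 0 := hy
    have hbracket : ⁅φ (a, 0), ((0 : A), y)⁆ = 0 := by
      rw [← φ.apply_symm_apply (0, y), ← φ.map_lie, LieAlgebra.Prod.bracket_apply, hy0]
      simp
    exact congrArg Prod.snd hbracket
  obtain ⟨e₁⟩ := nonempty_prod_ker_lieEquiv_of_bijective_snd φ b h
  obtain ⟨e₂⟩ := nonempty_prod_ker_lieEquiv_of_bijective_comp c b h hcb
  exact ⟨e₁.symm.trans e₂⟩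

/-- The endomorphism `A₁ → A₁ × B₁ ≃ A₂ × B₂ → A₂ → A₂ × B₂ ≃ A₁ × B₁ → A₁` cut out by a comparison
of two direct decompositions. It commutes with the adjoint action, so its Fitting decomposition
consists of ideals. -/
def roundTripEnd (φ : (A₁ × B₁) ≃ₗ⁅R⁆ (A₂ × B₂)) : A₁ →ₗ⁅R, A₁⁆ A₁ where
  toLinearMap := LinearMap.fst R A₁ B₁ ∘ₗ φ.symm.toLinearEquiv ∘ₗ LinearMap.inl R A₂ B₂ ∘ₗ
    LinearMap.fst R A₂ B₂ ∘ₗ φ.toLinearEquiv ∘ₗ LinearMap.inl R A₁ B₁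
  map_lie' := fun {x y} ↦ by
    have hx : ((⁅x, y⁆, 0) : A₁ × B₁) = ⁅((x, 0) : A₁ × B₁), (y, 0)⁆ := by simp
    have hproj (z w : A₂ × B₂) : ((⁅z, w⁆.1, 0) : A₂ × B₂) = ⁅z, (w.1, (0 : B₂))⁆ := by simp
    change (φ.symm ((φ (⁅x, y⁆, 0)).1, 0)).1 = ⁅x, (φ.symm ((φ (y, 0)).1, 0)).1⁆
    rw [hx, φ.map_lie, hproj, φ.symm.map_lie, φ.symm_apply_apply, LieAlgebra.Prod.bracket_apply]

theorem roundTripEnd_apply (φ : (A₁ × B₁) ≃ₗ⁅R⁆ (A₂ × B₂)) (x : A₁) :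
    roundTripEnd φ x = (φ.symm ((φ (x, 0)).1, 0)).1 := rfl

theorem roundTripEnd_add_fst_symm_snd (φ : (A₁ × B₁) ≃ₗ⁅R⁆ (A₂ × B₂)) (x : A₁) :
    roundTripEnd φ x + (φ.symm (0, (φ (x, 0)).2)).1 = x := by
  rw [roundTripEnd_apply, ← Prod.fst_add, ← map_add, Prod.mk_add_mk, add_zero, zero_add,
    Prod.mk.eta, φ.symm_apply_apply]

theorem nonempty_lieEquiv_or_exists_isCompl [IsNoetherian R A] [IsArtinian R A]
    (φ : (A × B₁) ≃ₗ⁅R⁆ (A × B₂)) :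
    Nonempty (B₁ ≃ₗ⁅R⁆ B₂) ∨ ∃ I J : LieIdeal R A, IsCompl I J ∧ I ≠ ⊥ ∧ J ≠ ⊥ := by
  obtain ⟨I, J, hIJ, hI, hJ⟩ := exists_isCompl_lieSubmodule_of_lieModuleHom (roundTripEnd φ)
  by_cases hI_bot : I = ⊥
  · let a : A →ₗ[R] A := LinearMap.fst R A B₂ ∘ₗ φ.toLinearEquiv ∘ₗ LinearMap.inl R A B₁
    have ha : Function.Injective a := (injective_iff_map_eq_zero a).2 fun x hx ↦ by
      have hx0 : (φ (x, 0)).1 = 0 := hx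
      have hxI : x ∈ I := hI x <| by
        rw [roundTripEnd_apply, hx0, Prod.mk_zero_zero, map_zero, Prod.fst_zero]
      rwa [hI_bot, LieSubmodule.mem_bot] at hxI
    exact .inl (nonempty_lieEquiv_of_bijective_fst φ
      (IsArtinian.bijective_of_injective_endomorphism a ha))
  by_cases hJ_bot : J = ⊥
  · let d : A →ₗ[R] A := LinearMap.fst R A B₁ ∘ₗ φ.symm.toLinearEquiv ∘ₗ LinearMap.inr R A B₂ ∘ₗ
      LinearMap.snd R A B₂ ∘ₗ φ.toLinearEquiv ∘ₗ LinearMap.inl R A B₁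
    have hd : Function.Injective d := (injective_iff_map_eq_zero d).2 fun x hx ↦ by
      have hx0 : (φ.symm (0, (φ (x, 0)).2)).1 = 0 := hx
      have hxJ : x ∈ J := hJ x (by simpa [hx0] using roundTripEnd_add_fst_symm_snd φ x)
      rwa [hJ_bot, LieSubmodule.mem_bot] at hxJ
    exact .inl (nonempty_lieEquiv_of_bijective_fst_symm_snd φ
      (IsArtinian.bijective_of_injective_endomorphism d hd))
  exact .inr ⟨I, J, hIJ, hI_bot, hJ_bot⟩

end LieAlgebra

/-- `A` is cancellable if `A × B₁ ≅ A × B₂` always implies `B₁ ≅ B₂`. The universes of the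
cofactors `B₁` and `B₂` are parameters, since a definition cannot quantify over all universes. -/
def IsLieCancellable.{v, w, uR, uA} (R : Type uR) (A : Type uA) [CommRing R] [LieRing A]
    [LieAlgebra R A] : Prop :=
  ∀ ⦃B₁ : Type v⦄ ⦃B₂ : Type w⦄ [LieRing B₁] [LieAlgebra R B₁] [LieRing B₂] [LieAlgebra R B₂],
    ((A × B₁) ≃ₗ⁅R⁆ (A × B₂)) → Nonempty (B₁ ≃ₗ⁅R⁆ B₂)

namespace IsLieCancellable

universe u v w

variable {R A : Type*} {A' : Type u} [CommRing R] [LieRing A] [LieAlgebra R A] [LieRing A']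
  [LieAlgebra R A']

theorem of_lieEquiv (e : A ≃ₗ⁅R⁆ A')
    (h : IsLieCancellable.{v, w} R A) : IsLieCancellable.{v, w} R A' :=
  fun _ _ _ _ _ _ φ ↦
    h ((lieProdCongr e .refl).trans (φ.trans (lieProdCongr e.symm .refl)))

theorem prod (hfst : IsLieCancellable.{max u v, max u w} R A)
    (hsnd : IsLieCancellable.{v, w} R A') :
    IsLieCancellable.{v, w} R (A × A') := by
  intro B₁ B₂ _ _ _ _ φ
  obtain ⟨ψ⟩ := hfst ((lieProdAssoc R A A' B₁).symm.trans (φ.trans (lieProdAssoc R A A' B₂)))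
  exact hsnd ψ

-- Multiplying the cofactors by a zero algebra moves them to a larger universe.
theorem of_max (h : IsLieCancellable.{max u v, max u w} R A') : IsLieCancellable.{v, w} R A' := by
  intro B₁ B₂ _ _ _ _ φ
  let e₁ := lieSubsingletonProd R (⊥ : LieIdeal R A') B₁
  let e₂ := lieSubsingletonProd R (⊥ : LieIdeal R A') B₂
  obtain ⟨ψ⟩ := h ((lieProdCongr .refl e₁).trans (φ.trans (lieProdCongr .refl e₂.symm)))
  exact ⟨e₁.symm.trans (ψ.trans e₂)⟩

theorem of_isNoetherian_of_isArtinian {A : Type u} [LieRing A] [LieAlgebra R A]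
    [IsNoetherian R A] [IsArtinian R A] :
    IsLieCancellable.{v, w} R A := by
  suffices h : IsLieCancellable.{max u v, max u w} R A from h.of_max
  induction hlen : Module.length R A using WellFoundedLT.induction generalizing A with
  | ind n ih =>
    intro B₁ B₂ _ _ _ _ φ
    obtain h | ⟨I, J, hIJ, hI, hJ⟩ := nonempty_lieEquiv_or_exists_isCompl φ
    · exact h
    subst hlen
    have hI_top : I ≠ ⊤ := fun h ↦ hJ (top_disjoint.1 (h ▸ hIJ.disjoint))
    have hJ_top : J ≠ ⊤ := fun h ↦ hI (disjoint_top.1 (h ▸ hIJ.disjoint))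
    have hI_cancel : IsLieCancellable.{max u v, max u w} R I :=
      ih _ (Submodule.length_lt (mt (LieSubmodule.toSubmodule_eq_top _).1 hI_top)) rfl
    have hJ_cancel : IsLieCancellable.{max u v, max u w} R J :=
      ih _ (Submodule.length_lt (mt (LieSubmodule.toSubmodule_eq_top _).1 hJ_top)) rfl
    obtain ⟨e⟩ := nonempty_prod_lieEquiv_of_isCompl hIJ
    exact (hI_cancel.prod hJ_cancel).of_lieEquiv e φ

end IsLieCancellable

theorem stmt_13_general {R A₁ A₂ B₁ B₂ : Type*} [CommRing R]
    [LieRing A₁] [LieAlgebra R A₁] [LieRing A₂] [LieAlgebra R A₂]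
    [LieRing B₁] [LieAlgebra R B₁] [LieRing B₂] [LieAlgebra R B₂]
    [IsNoetherian R A₁] [IsArtinian R A₁]
    (hA : Nonempty (A₁ ≃ₗ⁅R⁆ A₂))
    (hprod : Nonempty ((A₁ × B₁) ≃ₗ⁅R⁆ (A₂ × B₂))) :
    Nonempty (B₁ ≃ₗ⁅R⁆ B₂) := by
  obtain ⟨e⟩ := hA
  obtain ⟨φ⟩ := hprod
  exact IsLieCancellable.of_isNoetherian_of_isArtinian (φ.trans (lieProdCongr e.symm .refl))

/-- **Lemma 3.2, purely even case.**
Let `A₁, A₂, B₁, B₂` be Lie algebras over a field of characteristic different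
from `2` and `3`, with `A₁, A₂` finite-dimensional.  If `A₁ ≅ A₂` and
`A₁ × B₁ ≅ A₂ × B₂` as Lie algebras, then `B₁ ≅ B₂` as Lie algebras. -/
theorem stmt_13 (K : Type*) [Field K] (h2 : (2 : K) ≠ 0) (h3 : (3 : K) ≠ 0)
    (A₁ A₂ B₁ B₂ : Type*)
    [LieRing A₁] [LieAlgebra K A₁] [LieRing A₂] [LieAlgebra K A₂]
    [LieRing B₁] [LieAlgebra K B₁] [LieRing B₂] [LieAlgebra K B₂]
    [FiniteDimensional K A₁] [FiniteDimensional K A₂]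
    (hA : Nonempty (A₁ ≃ₗ⁅K⁆ A₂))
    (hprod : Nonempty ((A₁ × B₁) ≃ₗ⁅K⁆ (A₂ × B₂))) :
    Nonempty (B₁ ≃ₗ⁅K⁆ B₂) :=
  stmt_13_general hA hprod
end

section
/- Let L be a finite-dimensional Lie algebra over a field of characteristic different from 2 and 3. Then the multiplier of L is unique up to Lie algebra isomorphism: if 0 → M₁ → C₁ → L → 0 and 0 → M₂ → C₂ → L → 0 are maximal stem extensions of L, then M₁ ≅ M₂. Moreover, for any free presentation 0 → R → F →π L → 0 of L, every multiplier of L is isomorphic to (R ∩ [F,F])/[R,F]. -/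
universe u

/-!
Stem kernels are central, hence abelian, so an isomorphism between two of them is an equality of
dimensions. To compare with `R ∩ [F,F] / [R,F]`, pass to the central extension
`T = F ⧸ [R,F] → L` with kernel `Z = R ⧸ [R,F]`; the quotient in question becomes `Z ∩ [T,T]`.
* For a central extension `T → L` with kernel `Z`, a complement of `Z ∩ [T,T]` in `Z` is central,
  hence an ideal, and dividing `T` by it gives a stem extension with kernel `≅ Z ∩ [T,T]`.
* If `T → L` factors through `φ : T → T'` with `T' → L` a stem extension, then
  `T' = φ(T) + Z(T')`, so `[T',T'] = φ([T,T])`, and the kernel of `T' → L` is covered by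
  `Z ∩ [T,T]`.
-/

section Ideals

variable {R L L' : Type*} [CommRing R] [LieRing L] [LieAlgebra R L] [LieRing L'] [LieAlgebra R L']

lemma map_inf_of_ker_le {f : L →ₗ⁅R⁆ L'} (hf : Function.Surjective f) {I : LieIdeal R L}
    (hI : f.ker ≤ I) (J : LieIdeal R L) :
    LieIdeal.map f (I ⊓ J) = LieIdeal.map f I ⊓ LieIdeal.map f J := by
  refine le_antisymm (le_inf (LieIdeal.map_mono inf_le_left) (LieIdeal.map_mono inf_le_right)) ?_
  rintro y ⟨hyI, hyJ⟩
  obtain ⟨⟨a, ha⟩, rfl⟩ := LieIdeal.mem_map_of_surjective hf hyI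
  obtain ⟨⟨b, hb⟩, hab : f b = f a⟩ := LieIdeal.mem_map_of_surjective hf hyJ
  have hba : b - a ∈ f.ker := by rw [LieHom.mem_ker, map_sub, hab, sub_self]
  have hbI : b ∈ I := by simpa using I.add_mem (hI hba) ha
  exact hab ▸ LieIdeal.mem_map (f := f) (I := I ⊓ J) ⟨hbI, hb⟩

lemma lie_top_le_ker_of_map_le_center {f : L →ₗ⁅R⁆ L'} {I : LieIdeal R L}
    (h : LieIdeal.map f I ≤ LieAlgebra.center R L') : ⁅I, (⊤ : LieIdeal R L)⁆ ≤ f.ker := by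
  refine (LieSubmodule.lie_le_iff ..).2 fun x hx y _ => ?_
  rw [LieHom.mem_ker, LieHom.map_lie, ← lie_skew, h (LieIdeal.mem_map hx) (f y), neg_zero]

lemma map_le_center_of_lie_top_le_ker {f : L →ₗ⁅R⁆ L'} (hf : Function.Surjective f)
    {I : LieIdeal R L} (h : ⁅I, (⊤ : LieIdeal R L)⁆ ≤ f.ker) :
    LieIdeal.map f I ≤ LieAlgebra.center R L' := by
  rw [LieIdeal.map_le_iff_le_comap]
  intro x hx y
  obtain ⟨y, rfl⟩ := hf y
  have hxy : f ⁅x, y⁆ = 0 := h (LieSubmodule.lie_mem_lie hx (LieSubmodule.mem_top y))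
  rw [LieHom.coe_toLinearMap, ← LieHom.map_lie, ← lie_skew, map_neg, hxy, neg_zero]

lemma map_le_center_of_le_center {f : L →ₗ⁅R⁆ L'} (hf : Function.Surjective f)
    {I : LieIdeal R L} (hI : I ≤ LieAlgebra.center R L) :
    LieIdeal.map f I ≤ LieAlgebra.center R L' := by
  refine map_le_center_of_lie_top_le_ker hf ((LieSubmodule.lie_le_iff ..).2 fun x hx y _ => ?_)
  rw [← lie_skew, hI hx y, neg_zero]
  exact zero_mem _

lemma derivedSeries_one_le_map_s14 {f : L →ₗ⁅R⁆ L'}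
    (h : LinearMap.range (f : L →ₗ[R] L') ⊔ (LieAlgebra.center R L').toSubmodule = ⊤) :
    (LieAlgebra.derivedSeries R L' 1).toSubmodule ≤
      (LieAlgebra.derivedSeries R L 1).toSubmodule.map (f : L →ₗ[R] L') := by
  refine (LieAlgebra.coe_derivedSeries_one_eq R L').trans_le (Submodule.span_le.2 ?_)
  rintro _ ⟨x, y, rfl⟩
  obtain ⟨_, ⟨a, rfl⟩, z, hz, rfl⟩ := Submodule.mem_sup.1 (h ▸ Submodule.mem_top : x ∈ _)
  obtain ⟨_, ⟨b, rfl⟩, w, hw, rfl⟩ := Submodule.mem_sup.1 (h ▸ Submodule.mem_top : y ∈ _)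
  have lie_w (t : L') : ⁅t, w⁆ = 0 := hw t
  have z_lie (t : L') : ⁅z, t⁆ = 0 := by rw [← lie_skew, hz t, neg_zero]
  refine ⟨⁅a, b⁆, LieSubmodule.lie_mem_lie (LieSubmodule.mem_top a) (LieSubmodule.mem_top b), ?_⟩
  simp only [LieHom.coe_toLinearMap, LieHom.map_lie, lie_add, add_lie, lie_w, z_lie, add_zero]

end Ideals

lemma rank_map_of_disjoint_ker {R : Type*} {L L' : Type u} [CommRing R] [LieRing L]
    [LieAlgebra R L] [LieRing L'] [LieAlgebra R L'] {f : L →ₗ⁅R⁆ L'} (hf : Function.Surjective f)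
    {I : LieIdeal R L} (hI : Disjoint I f.ker) :
    Module.rank R (LieIdeal.map f I) = Module.rank R I := by
  have hinj : Function.Injective ((f : L →ₗ[R] L').domRestrict I.toSubmodule) :=
    LinearMap.injective_domRestrict_iff.2 (LieSubmodule.disjoint_toSubmodule.2 hI)
  have hrange : (LieIdeal.map f I).toSubmodule =
      LinearMap.range ((f : L →ₗ[R] L').domRestrict I.toSubmodule) :=
    (LieIdeal.coe_map_of_surjective hf).trans (LinearMap.range_domRestrict ..).symm
  exact (congrArg (fun N : Submodule R L' => Module.rank R N) hrange).trans
    (rank_range_of_injective _ hinj)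

lemma nonempty_lieEquiv_of_rank_eq {R : Type*} {A B : Type u} [CommRing R] [Nontrivial R]
    [LieRing A] [LieAlgebra R A] [LieRing B] [LieAlgebra R B] [IsLieAbelian A] [IsLieAbelian B]
    [Module.Free R A] [Module.Free R B] (h : Module.rank R A = Module.rank R B) :
    Nonempty (A ≃ₗ⁅R⁆ B) := by
  obtain ⟨e⟩ := nonempty_linearEquiv_of_rank_eq h
  exact ⟨{ e with map_lie' := by intros; simp [trivial_lie_zero] }⟩

section Quotient

variable {R L L' : Type*} [CommRing R] [LieRing L] [LieAlgebra R L] [LieRing L'] [LieAlgebra R L']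
  (I : LieIdeal R L)

lemma quotMk_surjective_s14 : Function.Surjective I.quotMk :=
  I.toSubmodule.mkQ_surjective

lemma ker_quotMk : I.quotMk.ker = I := by
  ext x
  exact Submodule.Quotient.mk_eq_zero I.toSubmodule

lemma map_quotMk_sup_self (J : LieIdeal R L) :
    LieIdeal.map I.quotMk (J ⊔ I) = LieIdeal.map I.quotMk J := by
  simpa only [ker_quotMk] using LieIdeal.map_sup_ker_eq_map (f := I.quotMk) (I := J)

/-- The morphism of Lie algebras `L ⧸ I → L'` induced by a morphism `L → L'` vanishing on `I`. -/
def quotLift (f : L →ₗ⁅R⁆ L') (h : I ≤ f.ker) : L ⧸ I →ₗ⁅R⁆ L' :=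
  { I.toSubmodule.liftQ (f : L →ₗ[R] L') h with
    map_lie' := by
      intro x y
      obtain ⟨x, rfl⟩ := quotMk_surjective_s14 I x
      obtain ⟨y, rfl⟩ := quotMk_surjective_s14 I y
      exact f.map_lie x y }

variable {I} {f : L →ₗ⁅R⁆ L'} (h : I ≤ f.ker)

lemma quotLift_surjective (hf : Function.Surjective f) : Function.Surjective (quotLift I f h) :=
  fun y => (hf y).imp' I.quotMk fun _ hx => hx

lemma ker_quotLift : (quotLift I f h).ker = LieIdeal.map I.quotMk f.ker := by
  refine le_antisymm (fun y hy => ?_) (LieIdeal.map_le_iff_le_comap.2 fun x hx => hx)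
  obtain ⟨x, rfl⟩ := quotMk_surjective_s14 I y
  exact LieIdeal.mem_map hy

end Quotient

lemma exists_disjoint_sup_eq_of_le_center {K T : Type*} [Field K] [LieRing T] [LieAlgebra K T]
    {N Z : LieIdeal K T} (hNZ : N ≤ Z) (hZ : Z ≤ LieAlgebra.center K T) :
    ∃ C : LieIdeal K T, Disjoint N C ∧ N ⊔ C = Z := by
  obtain ⟨C, hNC, hsup⟩ := IsModularLattice.exists_disjoint_and_sup_eq
    (show N.toSubmodule ≤ Z.toSubmodule from hNZ)
  have hCZ : C ≤ Z.toSubmodule := hsup ▸ le_sup_right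
  obtain ⟨C, rfl⟩ := (C.exists_lieSubmodule_coe_eq_iff T).2 fun x z hz => by
    rw [hZ (hCZ hz) x]
    exact zero_mem C
  exact ⟨C, LieSubmodule.disjoint_toSubmodule.1 hNC, by
    rw [← LieSubmodule.toSubmodule_inj, LieSubmodule.sup_toSubmodule, hsup]⟩

section HopfMultiplier

variable {R F L : Type*} [CommRing R] [LieRing F] [LieAlgebra R F] [LieRing L] [LieAlgebra R L]

/-- The quotient `(ker π ∩ [F,F]) / [ker π, F]` attached by Hopf's formula to `π : F → L`,
encoded as an ideal of `F ⧸ [ker π, F]`. -/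
def hopfMultiplier (π : F →ₗ⁅R⁆ L) : LieIdeal R (F ⧸ ⁅π.ker, (⊤ : LieIdeal R F)⁆) :=
  LieIdeal.map (⁅π.ker, (⊤ : LieIdeal R F)⁆ : LieIdeal R F).quotMk
    (π.ker ⊓ LieAlgebra.derivedSeries R F 1)

/-- The extension `F ⧸ [ker π, F] → L` induced by `π : F → L`; it is the largest quotient of `π`
with central kernel. -/
def centralQuotient (π : F →ₗ⁅R⁆ L) : (F ⧸ ⁅π.ker, (⊤ : LieIdeal R F)⁆) →ₗ⁅R⁆ L :=
  quotLift _ π (LieSubmodule.lie_le_left _ _)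

lemma centralQuotient_surjective {π : F →ₗ⁅R⁆ L} (hπ : Function.Surjective π) :
    Function.Surjective (centralQuotient π) :=
  quotLift_surjective _ hπ

lemma ker_centralQuotient_le_center (π : F →ₗ⁅R⁆ L) :
    (centralQuotient π).ker ≤ LieAlgebra.center R _ := by
  rw [centralQuotient, ker_quotLift]
  exact map_le_center_of_lie_top_le_ker (quotMk_surjective_s14 _) (ker_quotMk _).ge

lemma hopfMultiplier_eq_ker_inf_derivedSeries (π : F →ₗ⁅R⁆ L) :
    hopfMultiplier π = (centralQuotient π).ker ⊓ LieAlgebra.derivedSeries R _ 1 := by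
  have hker : (⁅π.ker, (⊤ : LieIdeal R F)⁆ : LieIdeal R F).quotMk.ker ≤ π.ker :=
    (ker_quotMk _).trans_le (LieSubmodule.lie_le_left _ _)
  rw [centralQuotient, ker_quotLift, ← LieIdeal.derivedSeries_map_eq 1 (quotMk_surjective_s14 _)]
  exact map_inf_of_ker_le (quotMk_surjective_s14 _) hker _

instance (π : F →ₗ⁅R⁆ L) : IsLieAbelian (hopfMultiplier π) :=
  LieAlgebra.abelian_of_le_center R _ _ <| by
    rw [hopfMultiplier_eq_ker_inf_derivedSeries]
    exact inf_le_left.trans (ker_centralQuotient_le_center π)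

end HopfMultiplier

namespace StemExtension

variable {K L : Type u} [Field K] [LieRing L] [LieAlgebra K L]

instance (E : StemExtension K L) : IsLieAbelian E.γ.ker :=
  LieAlgebra.abelian_of_le_center K _ _ E.central

/-- A stem extension is maximal if its kernel, a multiplier of `L`, has the largest dimension
(as a cardinal) among all stem extensions of `L`. -/
def IsMaximal (E : StemExtension K L) : Prop :=
  ∀ E' : StemExtension K L, Module.rank K E'.γ.ker ≤ Module.rank K E.γ.ker

theorem IsMaximal.nonempty_ker_equiv {E₁ E₂ : StemExtension K L} (h₁ : E₁.IsMaximal)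
    (h₂ : E₂.IsMaximal) : Nonempty (E₁.γ.ker ≃ₗ⁅K⁆ E₂.γ.ker) :=
  nonempty_lieEquiv_of_rank_eq (le_antisymm (h₂ E₁) (h₁ E₂))

section

variable {T : Type u} [LieRing T] [LieAlgebra K T] {γ : T →ₗ⁅K⁆ L}

/-- The stem extension `T ⧸ C → L` obtained from a central extension `γ : T → L` by dividing out an
ideal `C ≤ ker γ` which, together with `[T,T]`, covers `ker γ`. -/
def ofCentral (hγ : Function.Surjective γ) (hcentral : γ.ker ≤ LieAlgebra.center K T)
    (C : LieIdeal K T) (hC : C ≤ γ.ker) (hstem : γ.ker ≤ LieAlgebra.derivedSeries K T 1 ⊔ C) :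
    StemExtension K L where
  T := T ⧸ C
  γ := quotLift C γ hC
  surj := quotLift_surjective hC hγ
  central := by
    rw [ker_quotLift]
    exact map_le_center_of_le_center (quotMk_surjective_s14 C) hcentral
  stem := by
    rw [ker_quotLift, ← LieIdeal.derivedSeries_map_eq 1 (quotMk_surjective_s14 C),
      ← map_quotMk_sup_self C (LieAlgebra.derivedSeries K T 1)]
    exact LieIdeal.map_mono hstem

theorem exists_rank_ker_eq_rank_ker_inf_derivedSeries (hγ : Function.Surjective γ)
    (hcentral : γ.ker ≤ LieAlgebra.center K T) :
    ∃ E : StemExtension K L, Module.rank K E.γ.ker =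
      Module.rank K ↥(γ.ker ⊓ LieAlgebra.derivedSeries K T 1) := by
  obtain ⟨C, hdisj, hsup⟩ := exists_disjoint_sup_eq_of_le_center
    (N := γ.ker ⊓ LieAlgebra.derivedSeries K T 1) inf_le_left hcentral
  have hC : C ≤ γ.ker := hsup ▸ le_sup_right
  have hstem : γ.ker ≤ LieAlgebra.derivedSeries K T 1 ⊔ C :=
    hsup.ge.trans (sup_le_sup_right inf_le_right C)
  have hker : (quotLift C γ hC).ker =
      LieIdeal.map C.quotMk (γ.ker ⊓ LieAlgebra.derivedSeries K T 1) := by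
    rw [ker_quotLift, ← map_quotMk_sup_self C (γ.ker ⊓ _), hsup]
  refine ⟨ofCentral hγ hcentral C hC hstem, ?_⟩
  change Module.rank K (quotLift C γ hC).ker = _
  rw [hker]
  exact rank_map_of_disjoint_ker (quotMk_surjective_s14 C) (by rwa [ker_quotMk])

end

theorem ker_le_map_ker_inf_derivedSeries (E : StemExtension K L) {T : Type*} [LieRing T]
    [LieAlgebra K T] {γ : T →ₗ⁅K⁆ L} {φ : T →ₗ⁅K⁆ E.T}
    (hγ : Function.Surjective γ) (hφ : E.γ.comp φ = γ) :
    E.γ.ker.toSubmodule ≤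
      (γ.ker ⊓ LieAlgebra.derivedSeries K T 1).toSubmodule.map (φ : T →ₗ[K] E.T) := by
  subst hφ
  have hspan : LinearMap.range (φ : T →ₗ[K] E.T) ⊔ (LieAlgebra.center K E.T).toSubmodule = ⊤ := by
    refine top_unique fun t _ => ?_
    obtain ⟨a, ha : E.γ (φ a) = E.γ t⟩ := hγ (E.γ t)
    have hta : t - φ a ∈ E.γ.ker := by rw [LieHom.mem_ker, map_sub, ha, sub_self]
    exact Submodule.mem_sup.2 ⟨φ a, ⟨a, rfl⟩, t - φ a, E.central hta, add_sub_cancel _ _⟩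
  intro t ht
  obtain ⟨x, hx, rfl⟩ := derivedSeries_one_le_map_s14 hspan (E.stem ht)
  exact ⟨x, ⟨ht, hx⟩, rfl⟩

variable {F : Type u} [LieRing F] [LieAlgebra K F] {π : F →ₗ⁅K⁆ L}

theorem exists_rank_ker_eq_rank_hopfMultiplier (hπ : Function.Surjective π) :
    ∃ E : StemExtension K L, Module.rank K E.γ.ker = Module.rank K (hopfMultiplier π) := by
  rw [hopfMultiplier_eq_ker_inf_derivedSeries]
  exact exists_rank_ker_eq_rank_ker_inf_derivedSeries (centralQuotient_surjective hπ)
    (ker_centralQuotient_le_center π)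

theorem rank_ker_le_rank_hopfMultiplier (E : StemExtension K L) {φ : F →ₗ⁅K⁆ E.T}
    (hπ : Function.Surjective π) (hφ : E.γ.comp φ = π) :
    Module.rank K E.γ.ker ≤ Module.rank K (hopfMultiplier π) := by
  have hmap : LieIdeal.map φ π.ker ≤ E.γ.ker :=
    LieIdeal.map_le_iff_le_comap.2 fun x hx => by subst hφ; exact hx
  have hvanish := lie_top_le_ker_of_map_le_center (hmap.trans E.central)
  have hcomp : E.γ.comp (quotLift _ φ hvanish) = centralQuotient π := by
    ext y
    obtain ⟨x, rfl⟩ := quotMk_surjective_s14 _ y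
    exact LieHom.congr_fun hφ x
  rw [hopfMultiplier_eq_ker_inf_derivedSeries]
  exact (Submodule.rank_mono
    (E.ker_le_map_ker_inf_derivedSeries (centralQuotient_surjective hπ) hcomp)).trans
      (rank_map_le _ _)

theorem IsMaximal.nonempty_ker_equiv_hopfMultiplier {E : StemExtension K L} (hE : E.IsMaximal)
    {φ : F →ₗ⁅K⁆ E.T} (hπ : Function.Surjective π) (hφ : E.γ.comp φ = π) :
    Nonempty (E.γ.ker ≃ₗ⁅K⁆ hopfMultiplier π) := by
  obtain ⟨E', hE'⟩ := exists_rank_ker_eq_rank_hopfMultiplier hπ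
  exact nonempty_lieEquiv_of_rank_eq
    (le_antisymm (E.rank_ker_le_rank_hopfMultiplier hπ hφ) (hE' ▸ hE E'))

end StemExtension

lemma exists_freeLieAlgebra_comp_eq {R T L : Type*} [CommRing R] [LieRing T] [LieAlgebra R T]
    [LieRing L] [LieAlgebra R L] {γ : T →ₗ⁅R⁆ L} (hγ : Function.Surjective γ) {ι : Type*}
    (π : FreeLieAlgebra R ι →ₗ⁅R⁆ L) : ∃ φ : FreeLieAlgebra R ι →ₗ⁅R⁆ T, γ.comp φ = π := by
  choose s hs using hγ
  refine ⟨FreeLieAlgebra.lift R fun i => s (π (FreeLieAlgebra.of R i)),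
    FreeLieAlgebra.hom_ext fun i => ?_⟩
  rw [LieHom.comp_apply, FreeLieAlgebra.lift_of_apply, hs]

theorem stmt_14_general (K : Type u) [Field K] (L : Type u) [LieRing L] [LieAlgebra K L]
    (E₁ E₂ : StemExtension K L)
    (hmax₁ : ∀ E' : StemExtension K L,
      Module.rank K E'.γ.ker ≤ Module.rank K E₁.γ.ker)
    (hmax₂ : ∀ E' : StemExtension K L,
      Module.rank K E'.γ.ker ≤ Module.rank K E₂.γ.ker) :
    Nonempty (E₁.γ.ker ≃ₗ⁅K⁆ E₂.γ.ker) ∧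
    ∀ (ι : Type u) (π : FreeLieAlgebra K ι →ₗ⁅K⁆ L),
      Function.Surjective π →
      Nonempty (E₁.γ.ker ≃ₗ⁅K⁆
        (LieIdeal.map (⁅π.ker, (⊤ : LieIdeal K (FreeLieAlgebra K ι))⁆ :
            LieIdeal K (FreeLieAlgebra K ι)).quotMk
          (π.ker ⊓ LieAlgebra.derivedSeries K (FreeLieAlgebra K ι) 1))) := by
  refine ⟨StemExtension.IsMaximal.nonempty_ker_equiv hmax₁ hmax₂, fun ι π hπ => ?_⟩
  obtain ⟨φ, hφ⟩ := exists_freeLieAlgebra_comp_eq E₁.surj π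
  exact StemExtension.IsMaximal.nonempty_ker_equiv_hopfMultiplier hmax₁ hπ hφ

/-- **Theorem 3.3, uniqueness of the multiplier, purely even case.**
Let `L` be a finite-dimensional Lie algebra over a field of characteristic
different from `2` and `3`.  The multiplier of `L` is unique up to Lie algebra
isomorphism: the kernels of any two maximal stem extensions of `L` are
isomorphic.  Moreover, for any free presentation `0 → R → F → L → 0` of `L`,
every multiplier of `L` is isomorphic to `(R ∩ [F,F])/[R,F]`, realised as the
image of `R ⊓ [F,F]` in `F ⧸ [R,F]`. -/
theorem stmt_14 (K : Type u) [Field K] (h2 : (2 : K) ≠ 0) (h3 : (3 : K) ≠ 0)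
    (L : Type u) [LieRing L] [LieAlgebra K L] [FiniteDimensional K L]
    (E₁ E₂ : StemExtension K L)
    (hmax₁ : ∀ E' : StemExtension K L,
      Module.rank K E'.γ.ker ≤ Module.rank K E₁.γ.ker)
    (hmax₂ : ∀ E' : StemExtension K L,
      Module.rank K E'.γ.ker ≤ Module.rank K E₂.γ.ker) :
    Nonempty (E₁.γ.ker ≃ₗ⁅K⁆ E₂.γ.ker) ∧
    ∀ (ι : Type u) (π : FreeLieAlgebra K ι →ₗ⁅K⁆ L),
      Function.Surjective π →
      Nonempty (E₁.γ.ker ≃ₗ⁅K⁆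
        (LieIdeal.map (⁅π.ker, (⊤ : LieIdeal K (FreeLieAlgebra K ι))⁆ :
            LieIdeal K (FreeLieAlgebra K ι)).quotMk
          (π.ker ⊓ LieAlgebra.derivedSeries K (FreeLieAlgebra K ι) 1))) :=
  stmt_14_general K L E₁ E₂ hmax₁ hmax₂
end
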